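/- There exists a constant c₁ > 0 such that for all integers t ≥ 3, r(C₅,t) ≥ c₁ · t^{10/7}/(log t)^{13/7}, where C₅ is the cycle of length 5. -/

import Mathlib

/-!
The lower bound comes from a pentagon-free graph on `p¹¹` vertices, for a prime `p` with `p⁷` of
order `t / (log t)²`, in which all independent sets can be counted well.

Write `F = 𝔽_p` and `K = 𝔽_{p³}`. Points are elements of `K × K × K × F × F` and lines are elements of
`F × K × K × F × F`, with incidence given by explicit formulas in the trace and norm of `K / F`
(`CycCubic.On`); there are `p¹¹` points and `p⁹` lines, and each point lies on `p` lines. The geometry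
contains no proper triangles, quadrangles or pentagons of lines (`CycCubic.no5`). To see this, extend
scalars so that the norm splits as a product of three coordinates. A closed chain of lines then gives
a trilinear identity (`tri5`), which says that a weighted sum of evaluations of
`(x - a)(y - b)(z - c)` vanishes for all `a, b, c`, and a quadratic identity in the weights (`sum5`).
Choosing `a, b, c` among the coordinates of the points handles all degenerate configurations, and an
inversion handles five distinct points (`flat`, `distinct5`).

Colour the points of every line with two colours at random, independently for different lines, and
join points of a common line when their colours differ there (`bipGraph`). A pentagon would lie
inside a single line, where the graph is bipartite, so there is none. With positive probability every
set `X` of at least `10p⁸` points has on its rich lines many points of the minority colour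
(`exists_colouring`), hence spans a vertex of degree at least `#X / (32p⁷)` in `X`
(`exists_large_degree`). Branching on such a vertex bounds the independence polynomial
(`indepPoly_le`), hence the number of independent `t`-sets. A random set of about `p³t/100` points
then contains no independent `t`-set (`exists_subset_avoiding`), and `p³t` has order
`t^{10/7} / (log t)^{6/7}`, which is at least the claimed order.
-/

/-- `I` is an independent set in `G`. -/
def IsIndepFinset {V : Type*} (G : SimpleGraph V) (I : Finset V) : Prop :=
  ∀ u ∈ I, ∀ v ∈ I, ¬ G.Adj u v

/-- `G` contains no subgraph isomorphic to `F`, i.e. there is no injective graph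
homomorphism from `F` to `G`. -/
def FFree {α β : Type*} (F : SimpleGraph α) (G : SimpleGraph β) : Prop :=
  ¬ ∃ f : F →g G, Function.Injective f

/-- The Ramsey number `r(F,t)`: the minimum `n` such that every `F`-free graph on `n`
vertices contains an independent set of size `t`. -/
noncomputable def ramseyF {α : Type*} (F : SimpleGraph α) (t : ℕ) : ℕ :=
  sInf {n : ℕ | ∀ G : SimpleGraph (Fin n), FFree F G →
    ∃ I : Finset (Fin n), I.card = t ∧ IsIndepFinset G I}

/-! ### Identities for closed chains of five lines -/

/-- Coordinates of a line over a field `K` on which the cubic norm form splits as `(x, y, z) ↦ xyz`.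
The entries `(A, B, C, E)` live in the eight-dimensional space spanned by the vectors
`(1, (x, y, z), (yz, zx, xy), xyz)`, and `Z` is one further coordinate. -/
structure ILine (K : Type*) where
  (A B₀ B₁ B₂ C₀ C₁ C₂ E Z : K)

/-- The relation between two lines `g` and `h` that meet in a point with parameters `(x, y, z)`:
their `(A, B, C, E)` coordinates differ by `d` times the vector `(1, (x, y, z), (yz, zx, xy), xyz)`,
and the last coordinate moves by `d` times the value on that vector of a linear form determined by
`g`. -/
structure Step {K : Type*} [Field K] (g h : ILine K) (x y z d : K) : Prop where
  hA : h.A = g.A + d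
  hB₀ : h.B₀ = g.B₀ + d * x
  hB₁ : h.B₁ = g.B₁ + d * y
  hB₂ : h.B₂ = g.B₂ + d * z
  hC₀ : h.C₀ = g.C₀ + d * (y * z)
  hC₁ : h.C₁ = g.C₁ + d * (z * x)
  hC₂ : h.C₂ = g.C₂ + d * (x * y)
  hE : h.E = g.E + d * (x * y * z)
  hZ : h.Z = g.Z + d * (g.A * (x * y * z) - g.E
    - (g.B₀ * (y * z) + g.B₁ * (z * x) + g.B₂ * (x * y)) + (g.C₀ * x + g.C₁ * y + g.C₂ * z))

/-- Around a closed chain of five lines the increments of `(A, B, C, E)` cancel. The eight resulting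
equations say exactly that the weighted sum of the forms `(x - a)(y - b)(z - c)` vanishes for all
`a, b, c`. -/
theorem tri5 {K : Type*} [Field K] {g₁ g₂ g₃ g₄ g₅ : ILine K}
    {x₁ x₂ x₃ x₄ x₅ y₁ y₂ y₃ y₄ y₅ z₁ z₂ z₃ z₄ z₅ d₁ d₂ d₃ d₄ d₅ : K}
    (h₁ : Step g₅ g₁ x₁ y₁ z₁ d₁) (h₂ : Step g₁ g₂ x₂ y₂ z₂ d₂) (h₃ : Step g₂ g₃ x₃ y₃ z₃ d₃)
    (h₄ : Step g₃ g₄ x₄ y₄ z₄ d₄) (h₅ : Step g₄ g₅ x₅ y₅ z₅ d₅) (a b c : K) :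
    d₁ * ((x₁ - a) * (y₁ - b) * (z₁ - c)) + d₂ * ((x₂ - a) * (y₂ - b) * (z₂ - c))
     + d₃ * ((x₃ - a) * (y₃ - b) * (z₃ - c)) + d₄ * ((x₄ - a) * (y₄ - b) * (z₄ - c))
     + d₅ * ((x₅ - a) * (y₅ - b) * (z₅ - c)) = 0 := by
  linear_combination -(h₁.hE + h₂.hE + h₃.hE + h₄.hE + h₅.hE)
    + a * (h₁.hC₀ + h₂.hC₀ + h₃.hC₀ + h₄.hC₀ + h₅.hC₀)
    + b * (h₁.hC₁ + h₂.hC₁ + h₃.hC₁ + h₄.hC₁ + h₅.hC₁)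
    + c * (h₁.hC₂ + h₂.hC₂ + h₃.hC₂ + h₄.hC₂ + h₅.hC₂)
    - b * c * (h₁.hB₀ + h₂.hB₀ + h₃.hB₀ + h₄.hB₀ + h₅.hB₀)
    - a * c * (h₁.hB₁ + h₂.hB₁ + h₃.hB₁ + h₄.hB₁ + h₅.hB₁)
    - a * b * (h₁.hB₂ + h₂.hB₂ + h₃.hB₂ + h₄.hB₂ + h₅.hB₂)
    + a * b * c * (h₁.hA + h₂.hA + h₃.hA + h₄.hA + h₅.hA)

/-- The trivial step: a line meets itself. -/
theorem Step.refl {K : Type*} [Field K] (g : ILine K) (x y z : K) : Step g g x y z 0 := by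
  constructor <;> ring

/-- Around a closed chain of five lines the increments of `Z` cancel as well; this is a quadratic
relation among the weights `dᵢ`, in which each pair of points enters through the norm of their
difference. -/
theorem sum5 {K : Type*} [Field K] {g₁ g₂ g₃ g₄ g₅ : ILine K}
    {x₁ x₂ x₃ x₄ x₅ y₁ y₂ y₃ y₄ y₅ z₁ z₂ z₃ z₄ z₅ d₁ d₂ d₃ d₄ d₅ : K}
    (h₁ : Step g₅ g₁ x₁ y₁ z₁ d₁) (h₂ : Step g₁ g₂ x₂ y₂ z₂ d₂) (h₃ : Step g₂ g₃ x₃ y₃ z₃ d₃)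
    (h₄ : Step g₃ g₄ x₄ y₄ z₄ d₄) (h₅ : Step g₄ g₅ x₅ y₅ z₅ d₅) :
    d₁ * d₂ * ((x₂ - x₁) * (y₂ - y₁) * (z₂ - z₁)) + d₁ * d₃ * ((x₃ - x₁) * (y₃ - y₁) * (z₃ - z₁))
    + d₁ * d₄ * ((x₄ - x₁) * (y₄ - y₁) * (z₄ - z₁)) + d₁ * d₅ * ((x₅ - x₁) * (y₅ - y₁) * (z₅ - z₁))
    + d₂ * d₃ * ((x₃ - x₂) * (y₃ - y₂) * (z₃ - z₂)) + d₂ * d₄ * ((x₄ - x₂) * (y₄ - y₂) * (z₄ - z₂))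
    + d₂ * d₅ * ((x₅ - x₂) * (y₅ - y₂) * (z₅ - z₂)) + d₃ * d₄ * ((x₄ - x₃) * (y₄ - y₃) * (z₄ - z₃))
    + d₃ * d₅ * ((x₅ - x₃) * (y₅ - y₃) * (z₅ - z₃)) + d₄ * d₅ * ((x₅ - x₄) * (y₅ - y₄) * (z₅ - z₄))
    = 0 := by
  obtain ⟨A₁, B₁₀, B₁₁, B₁₂, C₁₀, C₁₁, C₁₂, E₁, Z₁⟩ := g₁
  obtain ⟨A₂, B₂₀, B₂₁, B₂₂, C₂₀, C₂₁, C₂₂, E₂, Z₂⟩ := g₂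
  obtain ⟨A₃, B₃₀, B₃₁, B₃₂, C₃₀, C₃₁, C₃₂, E₃, Z₃⟩ := g₃
  obtain ⟨A₄, B₄₀, B₄₁, B₄₂, C₄₀, C₄₁, C₄₂, E₄, Z₄⟩ := g₄
  obtain ⟨A₅, B₅₀, B₅₁, B₅₂, C₅₀, C₅₁, C₅₂, E₅, Z₅⟩ := g₅
  obtain ⟨a1, a2, a3, a4, a5, a6, a7, a8, a9⟩ := h₁
  obtain ⟨b1, b2, b3, b4, b5, b6, b7, b8, b9⟩ := h₂
  obtain ⟨c1, c2, c3, c4, c5, c6, c7, c8, c9⟩ := h₃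
  obtain ⟨e1, e2, e3, e4, e5, e6, e7, e8, e9⟩ := h₄
  obtain ⟨f1, f2, f3, f4, f5, f6, f7, f8, f9⟩ := h₅
  dsimp only at *
  subst a1 a2 a3 a4 a5 a6 a7 a8 a9 b1 b2 b3 b4 b5 b6 b7 b8 b9 c1 c2 c3 c4 c5 c6 c7 c8 c9
    e1 e2 e3 e4 e5 e6 e7 e8 e9
  linear_combination - f9 + A₅ * f8 - E₅ * f1 - B₅₀ * f5 - B₅₁ * f6 - B₅₂ * f7 + C₅₀ * f2 + C₅₁ * f3 + C₅₂ * f4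

/-- The algebraic core of the pentagon case, for five points of which the first is at infinity and
the second at the origin. The mixed linear relations force the three coordinate vectors to be
proportional, which reduces everything to a one-variable computation; there the quadratic relation
`S` leaves twice a nonzero quantity equal to zero. -/
theorem flat {K : Type*} [Field K] (h2 : (2 : K) ≠ 0) {e₂ e₃ e₄ e₅ a₃ a₄ a₅ b₃ b₄ b₅ c₃ c₄ c₅ : K}
    (he₅ : e₅ ≠ 0)
    (ha₃ : a₃ ≠ 0) (ha₄ : a₄ ≠ 0) (ha₅ : a₅ ≠ 0) (hb₃ : b₃ ≠ 0) (hb₄ : b₄ ≠ 0) (hb₅ : b₅ ≠ 0)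
    (hc₃ : c₃ ≠ 0) (hc₄ : c₄ ≠ 0) (hc₅ : c₅ ≠ 0)
    (a34 : a₃ ≠ a₄) (a35 : a₃ ≠ a₅) (a45 : a₄ ≠ a₅)
    (b34 : b₃ ≠ b₄) (b45 : b₄ ≠ b₅) (b35 : b₃ ≠ b₅)
    (c34 : c₃ ≠ c₄) (c45 : c₄ ≠ c₅) (c35 : c₃ ≠ c₅) (he₄ : e₄ ≠ 0) (he₃ : e₃ ≠ 0)
    (s0 : e₂ + e₃ + e₄ + e₅ = 0)
    (sa : e₃ * a₃ + e₄ * a₄ + e₅ * a₅ = 0) (sb : e₃ * b₃ + e₄ * b₄ + e₅ * b₅ = 0)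
    (sc : e₃ * c₃ + e₄ * c₄ + e₅ * c₅ = 0)
    (sab : e₃ * (a₃ * b₃) + e₄ * (a₄ * b₄) + e₅ * (a₅ * b₅) = 0)
    (sbc : e₃ * (b₃ * c₃) + e₄ * (b₄ * c₄) + e₅ * (b₅ * c₅) = 0)
    (sac : e₃ * (a₃ * c₃) + e₄ * (a₄ * c₄) + e₅ * (a₅ * c₅) = 0)
    (S : - e₂ * e₃ * (a₃ * b₃ * c₃) - e₂ * e₄ * (a₄ * b₄ * c₄) - e₂ * e₅ * (a₅ * b₅ * c₅)
      + e₃ * e₄ * ((a₃ - a₄) * (b₃ - b₄) * (c₃ - c₄))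
      + e₃ * e₅ * ((a₃ - a₅) * (b₃ - b₅) * (c₃ - c₅))
      + e₄ * e₅ * ((a₄ - a₅) * (b₄ - b₅) * (c₄ - c₅)) = 0) : False := by
  -- two mixed relations with a common coordinate give proportionality of the other two
  have prop : ∀ {e₃ e₄ e₅ a₃ a₄ a₅ b₃ b₄ b₅ c₃ c₄ c₅ : K}, e₄ ≠ 0 → e₅ ≠ 0 → c₃ ≠ c₅ → c₃ ≠ c₄ →
      e₃ * a₃ + e₄ * a₄ + e₅ * a₅ = 0 → e₃ * b₃ + e₄ * b₄ + e₅ * b₅ = 0 →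
      e₃ * (b₃ * c₃) + e₄ * (b₄ * c₄) + e₅ * (b₅ * c₅) = 0 →
      e₃ * (a₃ * c₃) + e₄ * (a₄ * c₄) + e₅ * (a₅ * c₅) = 0 → a₄ * b₅ = a₅ * b₄ := by
    intro e₃ e₄ e₅ a₃ a₄ a₅ b₃ b₄ b₅ c₃ c₄ c₅ he₄ he₅ c35 c34 sa sb sbc sac
    have h1 : e₄ * a₄ * (c₄ - c₃) = -(e₅ * a₅ * (c₅ - c₃)) := by
      linear_combination sac - c₃ * sa
    have h2 : e₄ * b₄ * (c₄ - c₃) = -(e₅ * b₅ * (c₅ - c₃)) := by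
      linear_combination sbc - c₃ * sb
    have : e₄ * (c₄ - c₃) * (a₄ * b₅ - a₅ * b₄) = 0 := by
      linear_combination b₅ * h1 - a₅ * h2
    have h3 : e₄ * (c₄ - c₃) ≠ 0 := mul_ne_zero he₄ (sub_ne_zero.2 c34.symm)
    exact sub_eq_zero.1 ((mul_eq_zero.1 this).resolve_left h3)
  have ab : a₄ * b₅ = a₅ * b₄ := prop he₄ he₅ c35 c34 sa sb sbc sac
  have ac : a₄ * c₅ = a₅ * c₄ := by
    refine prop (e₃ := e₃) (a₃ := a₃) (b₃ := c₃) (c₃ := b₃) he₄ he₅ b35 b34 sa sc ?_ sab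
    linear_combination sbc
  have ab' : a₃ * b₅ = a₅ * b₃ := by
    refine prop (e₃ := e₄) (a₃ := a₄) (b₃ := b₄) (c₃ := c₄) (c₄ := c₃) he₃ he₅ c45 c34.symm
      ?_ ?_ ?_ ?_
    exacts [by linear_combination sa, by linear_combination sb, by linear_combination sbc,
      by linear_combination sac]
  have ac' : a₃ * c₅ = a₅ * c₃ := by
    refine prop (e₃ := e₄) (a₃ := a₄) (b₃ := c₄) (c₃ := b₄) (c₄ := b₃) he₃ he₅ b45 b34.symm
      ?_ ?_ ?_ ?_
    exacts [by linear_combination sa, by linear_combination sc, by linear_combination sbc,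
      by linear_combination sab]
  obtain rfl : b₄ = b₅ / a₅ * a₄ := by field_simp; linear_combination -ab
  obtain rfl : b₃ = b₅ / a₅ * a₃ := by field_simp; linear_combination -ab'
  obtain rfl : c₄ = c₅ / a₅ * a₄ := by field_simp; linear_combination -ac
  obtain rfl : c₃ = c₅ / a₅ * a₃ := by field_simp; linear_combination -ac'
  have q : e₃ * a₃ ^ 2 + e₄ * a₄ ^ 2 + e₅ * a₅ ^ 2 = 0 := by
    have : b₅ / a₅ * (e₃ * a₃ ^ 2 + e₄ * a₄ ^ 2 + e₅ * a₅ ^ 2) = 0 := by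
      rw [← sab]; field_simp
    exact (mul_eq_zero.1 this).resolve_left (div_ne_zero hb₅ ha₅)
  have r : e₂ * (e₃ * a₃ ^ 3 + e₄ * a₄ ^ 3 + e₅ * a₅ ^ 3) = e₃ * e₄ * (a₃ - a₄) ^ 3 +
      e₃ * e₅ * (a₃ - a₅) ^ 3 + e₄ * e₅ * (a₄ - a₅) ^ 3 := by
    have hne : b₅ * c₅ / a₅ ^ 2 ≠ 0 := div_ne_zero (mul_ne_zero hb₅ hc₅) (pow_ne_zero _ ha₅)
    apply mul_left_cancel₀ hne
    rw [← sub_eq_zero, ← neg_eq_zero]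
    rw [← S]; field_simp; ring
  have n34 := sub_ne_zero.2 a34
  have n35 := sub_ne_zero.2 a35
  have n45 := sub_ne_zero.2 a45
  have k3 : e₃ = - (e₅ * a₅ * (a₄ - a₅)) / (a₃ * (a₄ - a₃)) := by
    have : a₄ - a₃ ≠ 0 := sub_ne_zero.2 a34.symm
    field_simp
    linear_combination a₄ * sa - q
  have k4 : e₄ = - (e₅ * a₅ * (a₃ - a₅)) / (a₄ * (a₃ - a₄)) := by
    field_simp
    linear_combination a₃ * sa - q
  obtain rfl : e₂ = - (e₃ + e₄ + e₅) := by linear_combination s0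
  have n34' : a₄ - a₃ ≠ 0 := sub_ne_zero.2 a34.symm
  have n54 : a₅ - a₄ ≠ 0 := sub_ne_zero.2 a45.symm
  have n53 : a₅ - a₃ ≠ 0 := sub_ne_zero.2 a35.symm
  have fin : 2 * (e₅ ^ 2 * a₅ * (a₅ - a₃) * (a₅ - a₄) ^ 2 / a₄) = 0 := by
    rw [← sub_eq_zero] at r
    rw [← r, k3, k4]
    field_simp
    ring
  refine (mul_ne_zero h2 (div_ne_zero ?_ ha₄)) fin
  exact mul_ne_zero (mul_ne_zero (mul_ne_zero (pow_ne_zero _ he₅) ha₅) n53) (pow_ne_zero _ n54)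

/-- Five points with pairwise distinct coordinates satisfy no such relations: the inversion
`x ↦ (x - x₁)⁻¹` in each coordinate, followed by a translation, brings them to the position of
`flat`. -/
theorem distinct5 {K : Type*} [Field K] (h2 : (2 : K) ≠ 0)
    {x₁ x₂ x₃ x₄ x₅ y₁ y₂ y₃ y₄ y₅ z₁ z₂ z₃ z₄ z₅ d₁ d₂ d₃ d₄ d₅ : K}
    (x12 : x₁ ≠ x₂) (x13 : x₁ ≠ x₃) (x14 : x₁ ≠ x₄) (x15 : x₁ ≠ x₅) (x23 : x₂ ≠ x₃)
    (x24 : x₂ ≠ x₄) (x25 : x₂ ≠ x₅) (x34 : x₃ ≠ x₄) (x35 : x₃ ≠ x₅) (x45 : x₄ ≠ x₅)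
    (y12 : y₁ ≠ y₂) (y13 : y₁ ≠ y₃) (y14 : y₁ ≠ y₄) (y15 : y₁ ≠ y₅) (y23 : y₂ ≠ y₃)
    (y24 : y₂ ≠ y₄) (y25 : y₂ ≠ y₅) (y34 : y₃ ≠ y₄) (y35 : y₃ ≠ y₅) (y45 : y₄ ≠ y₅)
    (z12 : z₁ ≠ z₂) (z13 : z₁ ≠ z₃) (z14 : z₁ ≠ z₄) (z15 : z₁ ≠ z₅) (z23 : z₂ ≠ z₃)
    (z24 : z₂ ≠ z₄) (z25 : z₂ ≠ z₅) (z34 : z₃ ≠ z₄) (z35 : z₃ ≠ z₅) (z45 : z₄ ≠ z₅)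
    (hd₃ : d₃ ≠ 0) (hd₄ : d₄ ≠ 0) (hd₅ : d₅ ≠ 0)
    (T : ∀ a b c : K, d₁ * ((x₁ - a) * (y₁ - b) * (z₁ - c)) + d₂ * ((x₂ - a) * (y₂ - b) * (z₂ - c))
     + d₃ * ((x₃ - a) * (y₃ - b) * (z₃ - c)) + d₄ * ((x₄ - a) * (y₄ - b) * (z₄ - c))
     + d₅ * ((x₅ - a) * (y₅ - b) * (z₅ - c)) = 0)
    (S : d₁ * d₂ * ((x₂ - x₁) * (y₂ - y₁) * (z₂ - z₁))
    + d₁ * d₃ * ((x₃ - x₁) * (y₃ - y₁) * (z₃ - z₁))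
    + d₁ * d₄ * ((x₄ - x₁) * (y₄ - y₁) * (z₄ - z₁)) + d₁ * d₅ * ((x₅ - x₁) * (y₅ - y₁) * (z₅ - z₁))
    + d₂ * d₃ * ((x₃ - x₂) * (y₃ - y₂) * (z₃ - z₂)) + d₂ * d₄ * ((x₄ - x₂) * (y₄ - y₂) * (z₄ - z₂))
    + d₂ * d₅ * ((x₅ - x₂) * (y₅ - y₂) * (z₅ - z₂)) + d₃ * d₄ * ((x₄ - x₃) * (y₄ - y₃) * (z₄ - z₃))
    + d₃ * d₅ * ((x₅ - x₃) * (y₅ - y₃) * (z₅ - z₃)) + d₄ * d₅ * ((x₅ - x₄) * (y₅ - y₄) * (z₅ - z₄))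
    = 0) : False := by
  have nx₂ : x₂ - x₁ ≠ 0 := sub_ne_zero.2 x12.symm
  have nx₃ : x₃ - x₁ ≠ 0 := sub_ne_zero.2 x13.symm
  have nx₄ : x₄ - x₁ ≠ 0 := sub_ne_zero.2 x14.symm
  have nx₅ : x₅ - x₁ ≠ 0 := sub_ne_zero.2 x15.symm
  have ny₂ : y₂ - y₁ ≠ 0 := sub_ne_zero.2 y12.symm
  have ny₃ : y₃ - y₁ ≠ 0 := sub_ne_zero.2 y13.symm
  have ny₄ : y₄ - y₁ ≠ 0 := sub_ne_zero.2 y14.symm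
  have ny₅ : y₅ - y₁ ≠ 0 := sub_ne_zero.2 y15.symm
  have nz₂ : z₂ - z₁ ≠ 0 := sub_ne_zero.2 z12.symm
  have nz₃ : z₃ - z₁ ≠ 0 := sub_ne_zero.2 z13.symm
  have nz₄ : z₄ - z₁ ≠ 0 := sub_ne_zero.2 z14.symm
  have nz₅ : z₅ - z₁ ≠ 0 := sub_ne_zero.2 z15.symm
  -- seven of the eight relations in coordinates centred at the first point
  have t0 := T x₁ y₁ z₁
  have tx := T (x₁ - 1) y₁ z₁
  have ty := T x₁ (y₁ - 1) z₁
  have tz := T x₁ y₁ (z₁ - 1)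
  have txy := T (x₁ - 1) (y₁ - 1) z₁
  have tyz := T x₁ (y₁ - 1) (z₁ - 1)
  have txz := T (x₁ - 1) y₁ (z₁ - 1)
  generalize hX₂ : x₂ - x₁ = X₂ at *
  generalize hX₃ : x₃ - x₁ = X₃ at *
  generalize hX₄ : x₄ - x₁ = X₄ at *
  generalize hX₅ : x₅ - x₁ = X₅ at *
  generalize hY₂ : y₂ - y₁ = Y₂ at *
  generalize hY₃ : y₃ - y₁ = Y₃ at *
  generalize hY₄ : y₄ - y₁ = Y₄ at *
  generalize hY₅ : y₅ - y₁ = Y₅ at *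
  generalize hZ₂ : z₂ - z₁ = Z₂ at *
  generalize hZ₃ : z₃ - z₁ = Z₃ at *
  generalize hZ₄ : z₄ - z₁ = Z₄ at *
  generalize hZ₅ : z₅ - z₁ = Z₅ at *
  obtain rfl : x₂ = X₂ + x₁ := by rw [← hX₂]; ring
  obtain rfl : x₃ = X₃ + x₁ := by rw [← hX₃]; ring
  obtain rfl : x₄ = X₄ + x₁ := by rw [← hX₄]; ring
  obtain rfl : x₅ = X₅ + x₁ := by rw [← hX₅]; ring
  obtain rfl : y₂ = Y₂ + y₁ := by rw [← hY₂]; ring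
  obtain rfl : y₃ = Y₃ + y₁ := by rw [← hY₃]; ring
  obtain rfl : y₄ = Y₄ + y₁ := by rw [← hY₄]; ring
  obtain rfl : y₅ = Y₅ + y₁ := by rw [← hY₅]; ring
  obtain rfl : z₂ = Z₂ + z₁ := by rw [← hZ₂]; ring
  obtain rfl : z₃ = Z₃ + z₁ := by rw [← hZ₃]; ring
  obtain rfl : z₄ = Z₄ + z₁ := by rw [← hZ₄]; ring
  obtain rfl : z₅ = Z₅ + z₁ := by rw [← hZ₅]; ring
  replace t0 : d₂ * (X₂ * Y₂ * Z₂) + d₃ * (X₃ * Y₃ * Z₃) + d₄ * (X₄ * Y₄ * Z₄)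
    + d₅ * (X₅ * Y₅ * Z₅) = 0 := by linear_combination t0
  replace tx : d₂ * (Y₂ * Z₂) + d₃ * (Y₃ * Z₃) + d₄ * (Y₄ * Z₄) + d₅ * (Y₅ * Z₅) = 0 := by
    linear_combination tx - t0
  replace ty : d₂ * (X₂ * Z₂) + d₃ * (X₃ * Z₃) + d₄ * (X₄ * Z₄) + d₅ * (X₅ * Z₅) = 0 := by
    linear_combination ty - t0
  replace tz : d₂ * (X₂ * Y₂) + d₃ * (X₃ * Y₃) + d₄ * (X₄ * Y₄) + d₅ * (X₅ * Y₅) = 0 := by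
    linear_combination tz - t0
  replace txy : d₂ * Z₂ + d₃ * Z₃ + d₄ * Z₄ + d₅ * Z₅ = 0 := by
    linear_combination txy - t0 - tx - ty
  replace tyz : d₂ * X₂ + d₃ * X₃ + d₄ * X₄ + d₅ * X₅ = 0 := by
    linear_combination tyz - t0 - ty - tz
  replace txz : d₂ * Y₂ + d₃ * Y₃ + d₄ * Y₄ + d₅ * Y₅ = 0 := by
    linear_combination txz - t0 - tx - tz
  -- inversion at the first point, then translation moving the image of the second point to `0`
  refine flat h2 (e₂ := d₂ * (X₂ * Y₂ * Z₂)) (e₃ := d₃ * (X₃ * Y₃ * Z₃)) (e₄ := d₄ * (X₄ * Y₄ * Z₄))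
    (e₅ := d₅ * (X₅ * Y₅ * Z₅)) (a₃ := X₃⁻¹ - X₂⁻¹) (a₄ := X₄⁻¹ - X₂⁻¹) (a₅ := X₅⁻¹ - X₂⁻¹)
    (b₃ := Y₃⁻¹ - Y₂⁻¹) (b₄ := Y₄⁻¹ - Y₂⁻¹) (b₅ := Y₅⁻¹ - Y₂⁻¹)
    (c₃ := Z₃⁻¹ - Z₂⁻¹) (c₄ := Z₄⁻¹ - Z₂⁻¹) (c₅ := Z₅⁻¹ - Z₂⁻¹)
    ?_ ?_ ?_ ?_ ?_ ?_ ?_ ?_ ?_ ?_ ?_ ?_ ?_ ?_ ?_ ?_ ?_ ?_ ?_ ?_ ?_ t0 ?_ ?_ ?_ ?_ ?_ ?_ ?_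
  iterate 21
    first
    | exact mul_ne_zero ‹_› (mul_ne_zero (mul_ne_zero ‹_› ‹_›) ‹_›)
    | (simp only [ne_eq, sub_eq_zero, sub_left_inj, inv_inj]; rintro rfl; exact absurd rfl ‹_ ≠ _›)
  · field_simp
    linear_combination X₂ * tx - t0
  · field_simp
    linear_combination Y₂ * ty - t0
  · field_simp
    linear_combination Z₂ * tz - t0
  · field_simp
    linear_combination X₂ * Y₂ * txy - X₂ * tx - Y₂ * ty + t0
  · field_simp
    linear_combination Y₂ * Z₂ * tyz - Y₂ * ty - Z₂ * tz + t0
  · field_simp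
    linear_combination X₂ * Z₂ * txz - X₂ * tx - Z₂ * tz + t0
  · field_simp
    linear_combination (X₂ * Y₂ * Z₂) * (S - d₁ * t0)

/-! ### Closed chains over a splitting field -/

section Chains

variable {K V : Type*} [Field K] {X Y Z : V → K} {g₁ g₂ g₃ g₄ g₅ : ILine K}
  {v₁ v₂ v₃ v₄ v₅ : V} {d₁ d₂ d₃ d₄ d₅ : K}

theorem prod3_ne {X Y Z : V → K} (hX : X.Injective) (hY : Y.Injective) (hZ : Z.Injective)
    {v a b c : V} (ha : v ≠ a) (hb : v ≠ b) (hc : v ≠ c) :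
    (X v - X a) * (Y v - Y b) * (Z v - Z c) ≠ 0 :=
  mul_ne_zero (mul_ne_zero (sub_ne_zero.2 (hX.ne ha)) (sub_ne_zero.2 (hY.ne hb)))
    (sub_ne_zero.2 (hZ.ne hc))

/-- In a closed chain of five lines, points at distance two along the chain are distinct: otherwise
a suitable choice of `a, b, c` annihilates all but one term of the trilinear identity. -/
theorem chain5_aux (hX : X.Injective) (hY : Y.Injective) (hZ : Z.Injective)
    (h₁ : Step g₅ g₁ (X v₁) (Y v₁) (Z v₁) d₁) (h₂ : Step g₁ g₂ (X v₂) (Y v₂) (Z v₂) d₂)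
    (h₃ : Step g₂ g₃ (X v₃) (Y v₃) (Z v₃) d₃) (h₄ : Step g₃ g₄ (X v₄) (Y v₄) (Z v₄) d₄)
    (h₅ : Step g₄ g₅ (X v₅) (Y v₅) (Z v₅) d₅)
    (n₁₂ : v₁ ≠ v₂) (n₃₄ : v₃ ≠ v₄) (n₄₅ : v₄ ≠ v₅) (n₅₁ : v₅ ≠ v₁)
    (e₄ : d₄ ≠ 0) (e₅ : d₅ ≠ 0) : v₁ ≠ v₃ := by
  rintro rfl
  have h52 : v₅ = v₂ := by
    by_contra h
    have := tri5 h₁ h₂ h₃ h₄ h₅ (X v₁) (Y v₂) (Z v₄)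
    simp only [sub_self, zero_mul, mul_zero, zero_add, add_zero] at this
    exact mul_ne_zero e₅ (prod3_ne hX hY hZ n₅₁ h n₄₅.symm) this
  subst h52
  have := tri5 h₁ h₂ h₃ h₄ h₅ (X v₁) (Y v₅) (Z v₅)
  simp only [sub_self, zero_mul, mul_zero, zero_add, add_zero] at this
  exact mul_ne_zero e₄ (prod3_ne hX hY hZ n₃₄.symm n₄₅ n₄₅) this

/-- No closed chain of five lines in which consecutive lines and consecutive points differ. -/
theorem chain5 (h2 : (2 : K) ≠ 0) (hX : X.Injective) (hY : Y.Injective) (hZ : Z.Injective)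
    (h₁ : Step g₅ g₁ (X v₁) (Y v₁) (Z v₁) d₁) (h₂ : Step g₁ g₂ (X v₂) (Y v₂) (Z v₂) d₂)
    (h₃ : Step g₂ g₃ (X v₃) (Y v₃) (Z v₃) d₃) (h₄ : Step g₃ g₄ (X v₄) (Y v₄) (Z v₄) d₄)
    (h₅ : Step g₄ g₅ (X v₅) (Y v₅) (Z v₅) d₅)
    (n₁₂ : v₁ ≠ v₂) (n₂₃ : v₂ ≠ v₃) (n₃₄ : v₃ ≠ v₄) (n₄₅ : v₄ ≠ v₅) (n₅₁ : v₅ ≠ v₁)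
    (e₁ : d₁ ≠ 0) (e₂ : d₂ ≠ 0) (e₃ : d₃ ≠ 0) (e₄ : d₄ ≠ 0) (e₅ : d₅ ≠ 0) : False := by
  have n₁₃ := chain5_aux hX hY hZ h₁ h₂ h₃ h₄ h₅ n₁₂ n₃₄ n₄₅ n₅₁ e₄ e₅
  have n₂₄ := chain5_aux hX hY hZ h₂ h₃ h₄ h₅ h₁ n₂₃ n₄₅ n₅₁ n₁₂ e₅ e₁
  have n₃₅ := chain5_aux hX hY hZ h₃ h₄ h₅ h₁ h₂ n₃₄ n₅₁ n₁₂ n₂₃ e₁ e₂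
  have n₄₁ := chain5_aux hX hY hZ h₄ h₅ h₁ h₂ h₃ n₄₅ n₁₂ n₂₃ n₃₄ e₂ e₃
  have n₅₂ := chain5_aux hX hY hZ h₅ h₁ h₂ h₃ h₄ n₅₁ n₂₃ n₃₄ n₄₅ e₃ e₄
  have S := sum5 h₁ h₂ h₃ h₄ h₅
  refine distinct5 h2 ?_ ?_ ?_ ?_ ?_ ?_ ?_ ?_ ?_ ?_ ?_ ?_ ?_ ?_ ?_ ?_ ?_ ?_ ?_ ?_ ?_ ?_ ?_ ?_ ?_ ?_
    ?_ ?_ ?_ ?_ e₃ e₄ e₅ (tri5 h₁ h₂ h₃ h₄ h₅) S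
  all_goals
    first
    | exact hX.ne ‹_› | exact hX.ne (Ne.symm ‹_›)
    | exact hY.ne ‹_› | exact hY.ne (Ne.symm ‹_›)
    | exact hZ.ne ‹_› | exact hZ.ne (Ne.symm ‹_›)

/-- No closed chain of four lines. If opposite points coincide in pairs, the trilinear identity
determines the weights up to sign and the quadratic identity gives the contradiction. -/
theorem chain4 (h2 : (2 : K) ≠ 0) (hX : X.Injective) (hY : Y.Injective) (hZ : Z.Injective)
    (h₁ : Step g₄ g₁ (X v₁) (Y v₁) (Z v₁) d₁) (h₂ : Step g₁ g₂ (X v₂) (Y v₂) (Z v₂) d₂)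
    (h₃ : Step g₂ g₃ (X v₃) (Y v₃) (Z v₃) d₃) (h₄ : Step g₃ g₄ (X v₄) (Y v₄) (Z v₄) d₄)
    (n₁₂ : v₁ ≠ v₂) (n₃₄ : v₃ ≠ v₄) (n₄₁ : v₄ ≠ v₁)
    (e₁ : d₁ ≠ 0) (e₂ : d₂ ≠ 0) (e₄ : d₄ ≠ 0) : False := by
  -- a chain of four lines is a chain of five with one trivial step
  have T := tri5 h₁ h₂ h₃ h₄ (Step.refl g₄ 0 0 0)
  have S := sum5 h₁ h₂ h₃ h₄ (Step.refl g₄ 0 0 0)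
  by_cases h13 : v₁ = v₃
  · subst h13
    obtain rfl : v₄ = v₂ := by
      by_contra h
      have := T (X v₁) (Y v₂) (Z v₁)
      simp only [sub_self, zero_mul, mul_zero, zero_add, add_zero] at this
      exact mul_ne_zero e₄ (prod3_ne hX hY hZ n₄₁ h n₄₁) this
    have p₁ := prod3_ne hX hY hZ n₄₁ n₄₁ n₄₁
    have t₁ := T (X v₁) (Y v₁) (Z v₁)
    have t₂ := T (X v₄) (Y v₄) (Z v₄)
    have s₁ : d₂ = - d₄ := by
      apply mul_right_cancel₀ p₁
      linear_combination t₁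
    have s₂ : d₁ = - d₃ := by
      apply mul_right_cancel₀ p₁
      linear_combination -t₂
    subst s₁ s₂
    have : 2 * (d₃ * d₄ * ((X v₄ - X v₁) * (Y v₄ - Y v₁) * (Z v₄ - Z v₁))) = 0 := by
      linear_combination S
    exact mul_ne_zero h2 (mul_ne_zero (mul_ne_zero (neg_ne_zero.1 e₁) e₄) p₁) this
  · have := T (X v₂) (Y v₃) (Z v₄)
    simp only [sub_self, zero_mul, mul_zero, zero_add, add_zero] at this
    exact mul_ne_zero e₁ (prod3_ne hX hY hZ n₁₂ h13 n₄₁.symm) this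

theorem chain3 (hX : X.Injective) (hY : Y.Injective) (hZ : Z.Injective)
    (h₁ : Step g₃ g₁ (X v₁) (Y v₁) (Z v₁) d₁) (h₂ : Step g₁ g₂ (X v₂) (Y v₂) (Z v₂) d₂)
    (h₃ : Step g₂ g₃ (X v₃) (Y v₃) (Z v₃) d₃)
    (n₁₂ : v₁ ≠ v₂) (n₃₁ : v₃ ≠ v₁) (e₁ : d₁ ≠ 0) : False := by
  have := tri5 h₁ h₂ h₃ (Step.refl g₃ 0 0 0) (Step.refl g₃ 0 0 0) (X v₂) (Y v₃) (Z v₃)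
  simp only [sub_self, zero_mul, mul_zero, zero_add, add_zero] at this
  exact mul_ne_zero e₁ (prod3_ne hX hY hZ n₁₂ n₃₁.symm n₃₁.symm) this

theorem chain2 (hX : X.Injective) (hY : Y.Injective) (hZ : Z.Injective)
    (h₁ : Step g₂ g₁ (X v₁) (Y v₁) (Z v₁) d₁) (h₂ : Step g₁ g₂ (X v₂) (Y v₂) (Z v₂) d₂)
    (n₁₂ : v₁ ≠ v₂) (e₁ : d₁ ≠ 0) : False := by
  have := tri5 h₁ h₂ (Step.refl g₂ 0 0 0) (Step.refl g₂ 0 0 0) (Step.refl g₂ 0 0 0)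
    (X v₂) (Y v₂) (Z v₂)
  simp only [sub_self, zero_mul, mul_zero, zero_add, add_zero] at this
  exact mul_ne_zero e₁ (prod3_ne hX hY hZ n₁₂ n₁₂ n₁₂) this

end Chains

/-! ### The point-line geometry of a cubic extension -/

/-- The data of a cyclic cubic extension `K / F` that the construction uses: an automorphism `σ` over
`F` of order dividing three, its square `τ`, and the trace and norm forms with values in `F`. -/
structure CycCubic (F K : Type*) [Field F] [Field K] [Algebra F K] where
  σ : K →+* K
  τ : K →+* K
  σσ : ∀ x, σ (σ x) = τ x
  στ : ∀ x, σ (τ x) = x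
  τσ : ∀ x, τ (σ x) = x
  ττ : ∀ x, τ (τ x) = σ x
  σF : ∀ a : F, σ (algebraMap F K a) = algebraMap F K a
  τF : ∀ a : F, τ (algebraMap F K a) = algebraMap F K a
  tr : K → F
  nm : K → F
  tr_eq : ∀ x, algebraMap F K (tr x) = x + σ x + τ x
  nm_eq : ∀ x, algebraMap F K (nm x) = x * σ x * τ x

/-- The finite field `𝔽_{p³}` over `𝔽_p`. -/
noncomputable def galoisCyc (p : ℕ) [hp : Fact p.Prime] : CycCubic (ZMod p) (GaloisField p 3) :=
  have h3 : ∀ x : GaloisField p 3, ((x ^ p) ^ p) ^ p = x := by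
    intro x
    have : Fintype (GaloisField p 3) := Fintype.ofFinite _
    have h := FiniteField.pow_card x
    rw [← Nat.card_eq_fintype_card, GaloisField.card p 3 (by norm_num)] at h
    conv_rhs => rw [← h]
    ring
  { σ := frobenius (GaloisField p 3) p
    τ := (frobenius (GaloisField p 3) p).comp (frobenius (GaloisField p 3) p)
    σσ := fun x => rfl
    στ := fun x => by simpa [frobenius_def] using h3 x
    τσ := fun x => by simpa [frobenius_def] using h3 x
    ττ := fun x => by simp [frobenius_def, h3]
    σF := fun a => by rw [frobenius_def, ← map_pow, ZMod.pow_card]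
    τF := fun a => by
      rw [RingHom.comp_apply, frobenius_def, frobenius_def, ← map_pow, ← map_pow, ZMod.pow_card,
        ZMod.pow_card]
    tr := Algebra.trace _ _
    nm := Algebra.norm _
    tr_eq := fun x => by
      rw [FiniteField.algebraMap_trace_eq_sum_pow, GaloisField.finrank p (by norm_num)]
      simp [Finset.sum_range_succ, frobenius_def, ← pow_mul, pow_two]
    nm_eq := fun x => by
      rw [FiniteField.algebraMap_norm_eq_prod_pow, GaloisField.finrank p (by norm_num)]
      simp [Finset.prod_range_succ, frobenius_def, ← pow_mul, pow_two] }

namespace CycCubic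

variable {F K : Type*} [Field F] [Field K] [Algebra F K] (D : CycCubic F K)

/-- The adjoint quadratic map `v ↦ v^#` with `v v^# = N(v)`. -/
def adj (v : K) : K := D.σ v * D.τ v

/-- The quadratic correction by which the last coordinate moves along a line. -/
def corr (g : F × K × K × F × F) (v : K) : F :=
  g.1 * D.nm v - g.2.2.2.1 - D.tr (g.2.1 * D.adj v) + D.tr (g.2.2.1 * v)

/-- The point with parameter `v` on the line `g = (α, β, γ, δ, z)`. -/
def proj (g : F × K × K × F × F) (v : K) : K × K × K × F × F :=
  (v, g.2.1 - algebraMap F K g.1 * v, g.2.2.1 - algebraMap F K g.1 * D.adj v,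
    g.2.2.2.1 - g.1 * D.nm v, g.2.2.2.2 - g.1 * D.corr g v)

/-- Incidence of the point `q` with the line `g`. -/
def On (q : K × K × K × F × F) (g : F × K × K × F × F) : Prop := D.proj g q.1 = q

/-- The coordinates of a line after extending scalars from `F` to `K`, where the trilinear form
splits: each `K`-coordinate is replaced by its three conjugates. -/
def emb (g : F × K × K × F × F) : ILine K where
  A := algebraMap F K g.1
  B₀ := g.2.1
  B₁ := D.σ g.2.1
  B₂ := D.τ g.2.1
  C₀ := g.2.2.1
  C₁ := D.σ g.2.2.1
  C₂ := D.τ g.2.2.1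
  E := algebraMap F K g.2.2.2.1
  Z := algebraMap F K g.2.2.2.2

variable {D}

/-- Two lines through a common point, seen over the splitting field, are related by a `Step` whose
parameters are the three conjugates of the first coordinate of the point. -/
theorem On.step {q : K × K × K × F × F} {g h : F × K × K × F × F} (hg : D.On q g)
    (hh : D.On q h) :
    Step (D.emb g) (D.emb h) q.1 (D.σ q.1) (D.τ q.1) (algebraMap F K (h.1 - g.1)) := by
  obtain ⟨v, q1, q2, q3, q4⟩ := q
  obtain ⟨a, b, c, e, z⟩ := g
  obtain ⟨a', b', c', e', z'⟩ := h
  simp only [On, proj, corr, Prod.mk.injEq, true_and] at hg hh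
  obtain ⟨rfl, rfl, rfl, rfl⟩ := hg
  obtain ⟨h1, h2, h3, h4⟩ := hh
  have h3' := congrArg (algebraMap F K) h3
  have h4' := congrArg (algebraMap F K) h4
  simp only [map_sub, map_add, map_mul, D.nm_eq, D.tr_eq, adj, D.στ, D.τσ, D.σσ, D.ττ]
    at h3' h4'
  have hb : b' = b + (algebraMap F K a' - algebraMap F K a) * v := by linear_combination h1
  have hc : c' = c + (algebraMap F K a' - algebraMap F K a) * (D.σ v * D.τ v) := by
    simp only [adj] at h2
    linear_combination h2
  subst hb hc
  simp only [map_sub, map_add, map_mul, D.σF, D.τF, D.στ, D.τσ, D.σσ, D.ττ] at h4'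
  constructor <;> simp only [emb, map_sub, map_add, map_mul, D.σF, D.τF, D.στ, D.τσ, D.σσ, D.ττ]
  case hE => linear_combination h3'
  case hZ => linear_combination h4' - algebraMap F K a' * h3'
  all_goals ring

/-- Lines through a common point are distinguished by their first coordinate. -/
theorem On.ext_line {q : K × K × K × F × F} {g h : F × K × K × F × F} (hg : D.On q g)
    (hh : D.On q h) (e : g.1 = h.1) : g = h := by
  obtain ⟨v, q1, q2, q3, q4⟩ := q
  obtain ⟨a, b, c, e, z⟩ := g
  obtain ⟨a', b', c', e', z'⟩ := h
  simp only [On, proj, corr, Prod.mk.injEq, true_and] at hg hh e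
  subst e
  obtain ⟨h1, h2, h3, h4⟩ := hh
  obtain ⟨g1, g2, g3, g4⟩ := hg
  have hb : b = b' := by linear_combination g1 - h1
  have hc : c = c' := by linear_combination g2 - h2
  have he : e = e' := by linear_combination g3 - h3
  subst hb hc he
  have hz : z = z' := by linear_combination g4 - h4
  rw [hz]

/-- Points on a common line are distinguished by their first coordinate. -/
theorem On.ext_point {q r : K × K × K × F × F} {g : F × K × K × F × F} (hq : D.On q g)
    (hr : D.On r g) (e : q.1 = r.1) : q = r := by
  rw [← hq, ← hr, e]

/-- The weight of a step between distinct lines is nonzero. -/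
theorem On.d_ne {q : K × K × K × F × F} {g h : F × K × K × F × F} (hg : D.On q g)
    (hh : D.On q h) (e : g ≠ h) : algebraMap F K (h.1 - g.1) ≠ 0 := by
  intro H
  rw [map_eq_zero, sub_eq_zero] at H
  exact e (hg.ext_line hh H.symm)

theorem On.v_ne {q r : K × K × K × F × F} {g : F × K × K × F × F} (hq : D.On q g)
    (hr : D.On r g) (e : q ≠ r) : q.1 ≠ r.1 := fun H => e (hq.ext_point hr H)

/-- Every point lies on exactly one line with prescribed first coordinate `α ∈ F`. -/
theorem exists_line (q : K × K × K × F × F) (a : F) : ∃ g, D.On q g ∧ g.1 = a := by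
  obtain ⟨v, q1, q2, q3, q4⟩ := q
  let g : F × K × K × F × F := (a, q1 + algebraMap F K a * v, q2 + algebraMap F K a * D.adj v,
    q3 + a * D.nm v, 0)
  refine ⟨(g.1, g.2.1, g.2.2.1, g.2.2.2.1, q4 + a * D.corr g v), ?_, rfl⟩
  simp only [On, proj, g, corr, Prod.mk.injEq, true_and]
  refine ⟨?_, ?_, ?_, ?_⟩ <;> ring

variable (D) in
theorem card_lines [Fintype F] [DecidableEq F] [DecidableEq K] [Fintype K]
    [∀ q g, Decidable (D.On q g)]
    (q : K × K × K × F × F) :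
    (Finset.univ.filter fun g => D.On q g).card = Fintype.card F := by
  refine Finset.card_bij (t := (Finset.univ : Finset F)) (fun g _ => g.1) (fun _ _ => Finset.mem_univ _) ?_ ?_
  · intro g hg h hh e
    exact (Finset.mem_filter.1 hg).2.ext_line (Finset.mem_filter.1 hh).2 e
  · intro a _
    obtain ⟨g, hg, ha⟩ := exists_line (D := D) q a
    exact ⟨g, by simpa using hg, ha⟩

variable {p₁ p₂ p₃ p₄ p₅ : K × K × K × F × F} {l₁ l₂ l₃ l₄ l₅ : F × K × K × F × F}

/-- Two distinct points lie on at most one common line. -/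
theorem no2 (n₁₂ : p₁ ≠ p₂) (h₁ : D.On p₁ l₁) (h₁' : D.On p₂ l₁) (h₂ : D.On p₂ l₂)
    (h₂' : D.On p₁ l₂) : l₁ = l₂ := by
  by_contra e
  exact chain2 (X := id) Function.injective_id D.σ.injective D.τ.injective
    (h₂'.step h₁) (h₁'.step h₂) (h₁.v_ne h₁' n₁₂) (h₂'.d_ne h₁ (Ne.symm e))

/-- The sides of a triangle all coincide. -/
theorem no3 (n₁₂ : p₁ ≠ p₂) (n₂₃ : p₂ ≠ p₃) (n₃₁ : p₃ ≠ p₁)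
    (h₁ : D.On p₁ l₁) (h₁' : D.On p₂ l₁) (h₂ : D.On p₂ l₂) (h₂' : D.On p₃ l₂)
    (h₃ : D.On p₃ l₃) (h₃' : D.On p₁ l₃) : l₁ = l₂ ∧ l₂ = l₃ := by
  by_cases e : l₃ = l₁
  · subst e
    have := no2 n₂₃ h₂ h₂' h₃ h₁'
    exact ⟨this.symm, this⟩
  · exact (chain3 (X := id) Function.injective_id D.σ.injective D.τ.injective
      (h₃'.step h₁) (h₁'.step h₂) (h₂'.step h₃) (h₁.v_ne h₁' n₁₂) (h₃.v_ne h₃' n₃₁)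
      (h₃'.d_ne h₁ e)).elim

/-- The sides of a quadrangle with distinct vertices all coincide. When two consecutive sides agree,
dropping their common vertex leaves a triangle. -/
theorem no4 (h2 : (2 : K) ≠ 0) (n₁₂ : p₁ ≠ p₂) (n₂₃ : p₂ ≠ p₃) (n₃₄ : p₃ ≠ p₄) (n₄₁ : p₄ ≠ p₁)
    (n₁₃ : p₁ ≠ p₃) (n₂₄ : p₂ ≠ p₄)
    (h₁ : D.On p₁ l₁) (h₁' : D.On p₂ l₁) (h₂ : D.On p₂ l₂) (h₂' : D.On p₃ l₂)
    (h₃ : D.On p₃ l₃) (h₃' : D.On p₄ l₃) (h₄ : D.On p₄ l₄) (h₄' : D.On p₁ l₄) :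
    l₁ = l₂ ∧ l₂ = l₃ ∧ l₃ = l₄ := by
  by_cases e₁ : l₄ = l₁
  · subst e₁
    obtain ⟨a, b⟩ := no3 n₂₃ n₃₄ n₂₄.symm h₂ h₂' h₃ h₃' h₄ h₁'
    exact ⟨by rw [a, b], a, b⟩
  by_cases e₂ : l₁ = l₂
  · subst e₂
    obtain ⟨a, b⟩ := no3 n₃₄ n₄₁ n₁₃ h₃ h₃' h₄ h₄' h₁ h₂'
    exact ⟨rfl, by rw [a, b], a⟩
  by_cases e₄ : l₃ = l₄
  · subst e₄
    obtain ⟨a, b⟩ := no3 n₁₂ n₂₃ n₁₃.symm h₁ h₁' h₂ h₂' h₃ h₄'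
    exact ⟨a, b, rfl⟩
  exact (chain4 h2 (X := id) Function.injective_id D.σ.injective D.τ.injective
      (h₄'.step h₁) (h₁'.step h₂) (h₂'.step h₃) (h₃'.step h₄)
      (h₁.v_ne h₁' n₁₂) (h₃.v_ne h₃' n₃₄) (h₄.v_ne h₄' n₄₁)
      (h₄'.d_ne h₁ e₁) (h₁'.d_ne h₂ e₂) (h₃'.d_ne h₄ e₄)).elim

/-- The sides of a pentagon with distinct vertices all coincide. -/
theorem no5 (h2 : (2 : K) ≠ 0) (n₁₂ : p₁ ≠ p₂) (n₂₃ : p₂ ≠ p₃) (n₃₄ : p₃ ≠ p₄) (n₄₅ : p₄ ≠ p₅)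
    (n₅₁ : p₅ ≠ p₁) (n₁₃ : p₁ ≠ p₃) (n₂₄ : p₂ ≠ p₄) (n₃₅ : p₃ ≠ p₅) (n₄₁ : p₄ ≠ p₁)
    (n₅₂ : p₅ ≠ p₂)
    (h₁ : D.On p₁ l₁) (h₁' : D.On p₂ l₁) (h₂ : D.On p₂ l₂) (h₂' : D.On p₃ l₂)
    (h₃ : D.On p₃ l₃) (h₃' : D.On p₄ l₃) (h₄ : D.On p₄ l₄) (h₄' : D.On p₅ l₄)
    (h₅ : D.On p₅ l₅) (h₅' : D.On p₁ l₅) :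
    l₁ = l₂ ∧ l₂ = l₃ ∧ l₃ = l₄ ∧ l₄ = l₅ := by
  by_cases e₁ : l₅ = l₁
  · subst e₁
    obtain ⟨a, b, c⟩ := no4 h2 n₂₃ n₃₄ n₄₅ n₅₂ n₂₄ n₃₅ h₂ h₂' h₃ h₃' h₄ h₄' h₅ h₁'
    exact ⟨by rw [a, b, c], a, b, c⟩
  by_cases e₂ : l₁ = l₂
  · subst e₂
    obtain ⟨a, b, c⟩ := no4 h2 n₃₄ n₄₅ n₅₁ n₁₃ n₃₅ n₄₁ h₃ h₃' h₄ h₄' h₅ h₅' h₁ h₂'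
    exact ⟨rfl, by rw [a, b, c], a, b⟩
  by_cases e₃ : l₂ = l₃
  · subst e₃
    obtain ⟨a, b, c⟩ := no4 h2 n₄₅ n₅₁ n₁₂ n₂₄ n₄₁ n₅₂ h₄ h₄' h₅ h₅' h₁ h₁' h₂ h₃'
    exact ⟨c, rfl, by rw [a, b, c], a⟩
  by_cases e₄ : l₃ = l₄
  · subst e₄
    obtain ⟨a, b, c⟩ := no4 h2 n₅₁ n₁₂ n₂₃ n₃₅.symm.symm n₅₂ n₁₃ h₅ h₅' h₁ h₁' h₂ h₂' h₃ h₄'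
    exact ⟨b, c, rfl, by rw [a, b, c]⟩
  by_cases e₅ : l₄ = l₅
  · subst e₅
    obtain ⟨a, b, c⟩ := no4 h2 n₁₂ n₂₃ n₃₄ n₄₁ n₁₃ n₂₄ h₁ h₁' h₂ h₂' h₃ h₃' h₄ h₅'
    exact ⟨a, b, c, rfl⟩
  exact (chain5 h2 (X := id) Function.injective_id D.σ.injective D.τ.injective
      (h₅'.step h₁) (h₁'.step h₂) (h₂'.step h₃) (h₃'.step h₄) (h₄'.step h₅)
      (h₁.v_ne h₁' n₁₂) (h₂.v_ne h₂' n₂₃) (h₃.v_ne h₃' n₃₄) (h₄.v_ne h₄' n₄₅) (h₅.v_ne h₅' n₅₁)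
      (h₅'.d_ne h₁ e₁) (h₁'.d_ne h₂ e₂) (h₂'.d_ne h₃ e₃) (h₃'.d_ne h₄ e₄) (h₄'.d_ne h₅ e₅)).elim

end CycCubic

/-! ### Random two-colourings of the lines -/

section Colouring

open Finset Classical

variable {P L : Type*} [Fintype P] [Fintype L]

/-- The graph obtained from a point-line structure by placing on each line `l` the complete
bipartite graph between its two colour classes under `χ l`. -/
def bipGraph (On : P → L → Prop) (χ : L → P → Bool) : SimpleGraph P where
  Adj u w := ∃ l, On u l ∧ On w l ∧ χ l u ≠ χ l w
  symm := ⟨fun _ _ ⟨l, hu, hw, h⟩ => ⟨l, hw, hu, h.symm⟩⟩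
  loopless := ⟨fun _ ⟨_, _, _, h⟩ => h rfl⟩

/-- The size of the smaller colour class of `S` under `f`. -/
def minority (S : Finset P) (f : P → Bool) : ℕ := min #{v ∈ S | f v = true} #{v ∈ S | f v = false}

/-- Generating function of the size of one colour class under a uniform colouring. -/
theorem sum_half_pow (S : Finset P) (b : Bool) :
    ∑ f : P → Bool, (1 / 2 : ℝ) ^ #{v ∈ S | f v = b} = 2 ^ Fintype.card P * (3 / 4) ^ #S := by
  have h : ∀ f : P → Bool, (1 / 2 : ℝ) ^ #{v ∈ S | f v = b}
      = ∏ v, if v ∈ S ∧ f v = b then (1 / 2 : ℝ) else 1 := by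
    intro f
    rw [Finset.prod_ite, prod_const, prod_const_one, mul_one]
    congr 2
    ext v; simp
  simp_rw [h]
  rw [← Fintype.prod_sum (fun v c => if v ∈ S ∧ c = b then (1 / 2 : ℝ) else 1)]
  have h' : ∀ v : P, (∑ c : Bool, if v ∈ S ∧ c = b then (1 / 2 : ℝ) else 1)
      = 2 * (if v ∈ S then 3 / 4 else 1) := by
    intro v
    by_cases hv : v ∈ S <;> cases b <;> simp [hv] <;> norm_num
  simp_rw [h']
  rw [prod_mul_distrib, prod_const, Finset.prod_ite, prod_const, prod_const_one, mul_one,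
    card_univ]
  congr 3
  ext v; simp

theorem sum_minority (S : Finset P) (hS : 5 ≤ #S) :
    ∑ f : P → Bool, (1 / 2 : ℝ) ^ minority S f ≤ 2 ^ Fintype.card P * (7 / 8) ^ #S := by
  calc ∑ f : P → Bool, (1 / 2 : ℝ) ^ minority S f
      ≤ ∑ f : P → Bool, ((1 / 2 : ℝ) ^ #{v ∈ S | f v = true} + (1 / 2 : ℝ) ^ #{v ∈ S | f v = false}) := by
        refine sum_le_sum fun f _ => ?_
        rcases min_choice #{v ∈ S | f v = true} #{v ∈ S | f v = false} with h | h <;>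
          rw [minority, h]
        · exact le_add_of_nonneg_right (by positivity)
        · exact le_add_of_nonneg_left (by positivity)
    _ = 2 ^ Fintype.card P * (2 * (3 / 4) ^ #S) := by
        rw [sum_add_distrib, sum_half_pow, sum_half_pow]; ring
    _ ≤ _ := by
        gcongr
        obtain ⟨k, hk⟩ := Nat.exists_eq_add_of_le hS
        rw [hk, pow_add, pow_add, ← mul_assoc]
        exact mul_le_mul (by norm_num) (pow_le_pow_left₀ (by norm_num) (by norm_num) _)
          (by positivity) (by positivity)

/-- Exponential-moment bound for independent random colourings of the lines. -/
theorem sum_prod_minority (T : L → Finset P) (A : Finset L) (hA : ∀ l ∈ A, 5 ≤ #(T l)) :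
    ∑ χ : L → P → Bool, (1 / 2 : ℝ) ^ (∑ l ∈ A, minority (T l) (χ l))
      ≤ Fintype.card (L → P → Bool) * (7 / 8) ^ (∑ l ∈ A, #(T l)) := by
  have h : ∀ χ : L → P → Bool, (1 / 2 : ℝ) ^ (∑ l ∈ A, minority (T l) (χ l))
      = ∏ l, if l ∈ A then (1 / 2 : ℝ) ^ minority (T l) (χ l) else 1 := by
    intro χ
    rw [← prod_pow_eq_pow_sum, ← prod_filter]
    simp
  simp_rw [h]
  rw [← Fintype.prod_sum (fun l f => if l ∈ A then (1 / 2 : ℝ) ^ minority (T l) f else 1)]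
  calc _ ≤ ∏ l, ((2 : ℝ) ^ Fintype.card P * if l ∈ A then (7 / 8 : ℝ) ^ #(T l) else 1) := by
        refine prod_le_prod (fun l _ => ?_) (fun l _ => ?_)
        · exact sum_nonneg fun f _ => by split_ifs <;> positivity
        · by_cases hl : l ∈ A
          · simpa [hl] using sum_minority (T l) (hA l hl)
          · simp [hl]
    _ = _ := by
        rw [prod_mul_distrib, prod_const, ← prod_filter]
        simp [prod_pow_eq_pow_sum]

/-- A line is rich for `X` when it carries at least half of the average number of points. -/
noncomputable def rich (On : P → L → Prop) (r : ℕ) (X : Finset P) : Finset L :=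
  {l | r * #X ≤ 2 * Fintype.card L * #{v ∈ X | On v l}}

variable {On : P → L → Prop} {r : ℕ}

/-- Double counting of the incidences between `X` and the lines. -/
theorem sum_line {Q : Type*} {On : Q → L → Prop} (hr : ∀ v, #{l | On v l} = r) (X : Finset Q) :
    ∑ l : L, #{v ∈ X | On v l} = r * #X := by
  have := sum_card_bipartiteAbove_eq_sum_card_bipartiteBelow (s := X) (t := (univ : Finset L)) On
  simp only [bipartiteAbove, bipartiteBelow, hr, sum_const, smul_eq_mul] at this
  rw [mul_comm, this]

/-- At least half of the incidences with `X` are carried by the rich lines. -/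
theorem sum_rich (hr : ∀ v, #{l | On v l} = r) (hL : 0 < Fintype.card L) (X : Finset P) :
    r * #X ≤ 2 * ∑ l ∈ rich On r X, #{v ∈ X | On v l} := by
  have h1 := sum_line hr X
  rw [← sum_filter_add_sum_filter_not univ (fun l => l ∈ rich On r X)] at h1
  have h2 : 2 * Fintype.card L * ∑ l with l ∉ rich On r X, #{v ∈ X | On v l}
      ≤ Fintype.card L * (r * #X) := by
    rw [mul_sum]
    calc _ ≤ ∑ l : L with l ∉ rich On r X, r * #X := by
          refine sum_le_sum fun l hl => ?_
          simp only [rich, mem_filter, mem_univ, true_and, not_le] at hl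
          exact hl.le
      _ ≤ _ := by
          rw [sum_const, smul_eq_mul]
          exact Nat.mul_le_mul_right _ (card_le_univ _)
  have h3 : 2 * ∑ l with l ∉ rich On r X, #{v ∈ X | On v l} ≤ r * #X :=
    Nat.le_of_mul_le_mul_left (by linarith) hL
  have h4 : ({l | l ∈ rich On r X} : Finset L) = rich On r X := by ext; simp
  rw [h4] at h1
  omega

/-- A fixed set `X` gets a small total minority count with probability at most `0.98^(r|X|)`. -/
theorem card_bad_le (hr : ∀ v, #{l | On v l} = r) (hL : 0 < Fintype.card L) (X : Finset P)
    (hX : 10 * Fintype.card L ≤ r * #X) :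
    (#{χ : L → P → Bool | 16 * ∑ l ∈ rich On r X, minority {v ∈ X | On v l} (χ l) < r * #X} : ℝ)
      ≤ Fintype.card (L → P → Bool) * ((49 / 50 : ℝ) ^ r) ^ #X := by
  set B := ({χ : L → P → Bool |
    16 * ∑ l ∈ rich On r X, minority {v ∈ X | On v l} (χ l) < r * #X} : Finset _)
  have h5 : ∀ l ∈ rich On r X, 5 ≤ #{v ∈ X | On v l} := by
    intro l hl
    simp only [rich, mem_filter, mem_univ, true_and] at hl
    have : Fintype.card L * 5 ≤ Fintype.card L * #{v ∈ X | On v l} := by linarith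
    exact Nat.le_of_mul_le_mul_left this hL
  have h1 := sum_prod_minority (fun l => ({v ∈ X | On v l} : Finset P)) (rich On r X) h5
  -- `1.045^16 ≥ 2` and `0.9355² ≥ 7/8` convert both exponents into powers of `r|X|`
  have ht : (1 / (209 / 200) : ℝ) ^ (r * #X) * #B ≤
      ∑ χ : L → P → Bool, (1 / 2 : ℝ) ^ (∑ l ∈ rich On r X, minority {v ∈ X | On v l} (χ l)) := by
    calc _ = ∑ χ ∈ B, (1 / (209 / 200) : ℝ) ^ (r * #X) := by
          rw [sum_const, nsmul_eq_mul, mul_comm]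
      _ ≤ ∑ χ ∈ B, (1 / 2 : ℝ) ^ (∑ l ∈ rich On r X, minority {v ∈ X | On v l} (χ l)) := by
          refine sum_le_sum fun χ hχ => ?_
          simp only [B, mem_filter, mem_univ, true_and] at hχ
          calc (1 / (209 / 200) : ℝ) ^ (r * #X) ≤ (1 / (209 / 200) : ℝ) ^
                (16 * ∑ l ∈ rich On r X, minority {v ∈ X | On v l} (χ l)) :=
                pow_le_pow_of_le_one (by norm_num) (by norm_num) hχ.le
            _ ≤ _ := by
                rw [pow_mul]
                exact pow_le_pow_left₀ (by positivity) (by norm_num) _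
      _ ≤ _ := sum_le_univ_sum_of_nonneg fun _ => by positivity
  have hs : (7 / 8 : ℝ) ^ (∑ l ∈ rich On r X, #{v ∈ X | On v l}) ≤ (1871 / 2000 : ℝ) ^ (r * #X) := by
    calc (7 / 8 : ℝ) ^ (∑ l ∈ rich On r X, #{v ∈ X | On v l})
        ≤ ((1871 / 2000 : ℝ) ^ 2) ^ (∑ l ∈ rich On r X, #{v ∈ X | On v l}) :=
          pow_le_pow_left₀ (by positivity) (by norm_num) _
      _ ≤ _ := by
          rw [← pow_mul]
          exact pow_le_pow_of_le_one (by norm_num) (by norm_num) (sum_rich hr hL X)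
  have hm := ht.trans (h1.trans (mul_le_mul_of_nonneg_left hs (by positivity)))
  rw [one_div, inv_pow, inv_mul_le_iff₀ (by positivity)] at hm
  refine hm.trans ?_
  rw [← pow_mul, mul_left_comm, ← mul_pow]
  gcongr
  norm_num

/-- A union bound over all large `X`: some colouring gives every large set a total minority count
proportional to its number of incidences. -/
theorem exists_colouring (hr : ∀ v, #{l | On v l} = r) (hL : 0 < Fintype.card L)
    (hn : Fintype.card P * (49 / 50 : ℝ) ^ r ≤ 1 / 2) :
    ∃ χ : L → P → Bool, ∀ X : Finset P, 10 * Fintype.card L ≤ r * #X →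
      r * #X ≤ 16 * ∑ l ∈ rich On r X, minority {v ∈ X | On v l} (χ l) := by
  by_contra! H
  set q : ℝ := (49 / 50 : ℝ) ^ r with hq
  have hq0 : 0 < q := by positivity
  let big : Finset (Finset P) := {X | 10 * Fintype.card L ≤ r * #X}
  have hcov : (univ : Finset (L → P → Bool)) ⊆ big.biUnion fun X =>
      {χ | 16 * ∑ l ∈ rich On r X, minority {v ∈ X | On v l} (χ l) < r * #X} := by
    intro χ _
    obtain ⟨X, h1, h2⟩ := H χ
    simp only [mem_biUnion, mem_filter, mem_univ, true_and, big]
    exact ⟨X, h1, h2⟩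
  have h1 : (Fintype.card (L → P → Bool) : ℝ) ≤
      ∑ X ∈ big, Fintype.card (L → P → Bool) * q ^ #X := by
    calc (Fintype.card (L → P → Bool) : ℝ) ≤ ∑ X ∈ big, (#{χ : L → P → Bool |
          16 * ∑ l ∈ rich On r X, minority {v ∈ X | On v l} (χ l) < r * #X} : ℝ) := by
          have := (card_le_card hcov).trans card_biUnion_le
          rw [card_univ] at this
          exact_mod_cast this
      _ ≤ _ := sum_le_sum fun X hX => card_bad_le hr hL X (mem_filter.1 hX).2
  have hbig : big ⊆ univ.erase ∅ := by
    intro X hX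
    have h := (mem_filter.1 hX).2
    refine mem_erase.2 ⟨?_, mem_univ _⟩
    rintro rfl
    simp at h; omega
  have h2 : ∑ X ∈ big, q ^ #X ≤ (1 + q) ^ Fintype.card P - 1 := by
    have h3 := Fintype.sum_pow_mul_eq_add_pow P q 1
    simp only [one_pow, mul_one] at h3
    rw [← add_sum_erase _ _ (mem_univ ∅)] at h3
    simp only [card_empty, pow_zero] at h3
    have h4 := sum_le_sum_of_subset_of_nonneg (f := fun X : Finset P => q ^ #X) hbig
      (fun _ _ _ => by positivity)
    rw [add_comm 1 q, ← h3]
    linarith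
  have h3 : (1 + q) ^ Fintype.card P < 2 := by
    have e1 : (1 + q) ^ Fintype.card P ≤ Real.exp (1 / 2) := by
      calc (1 + q) ^ Fintype.card P ≤ Real.exp q ^ Fintype.card P :=
            pow_le_pow_left₀ (by positivity) (by linarith [Real.add_one_le_exp q]) _
        _ = Real.exp (Fintype.card P * q) := (Real.exp_nat_mul _ _).symm
        _ ≤ _ := Real.exp_le_exp.2 hn
    have e2 : Real.exp (1 / 2) ^ 2 = Real.exp 1 := by
      rw [← Real.exp_nat_mul]; norm_num
    have e3 := Real.exp_one_lt_d9
    nlinarith [Real.exp_pos (1 / 2)]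
  rw [← mul_sum] at h1
  have hc : (0 : ℝ) < Fintype.card (L → P → Bool) := by exact_mod_cast Fintype.card_pos
  nlinarith

/-- Lower bound for the ordered pairs in `S` that receive different colours; it is
`2ab ≥ (a + b) min(a, b)` for the class sizes `a` and `b`. -/
theorem card_pairs {Q : Type*} (S : Finset Q) (f : Q → Bool) :
    #S * minority S f ≤ #{e ∈ S ×ˢ S | f e.1 ≠ f e.2} := by
  set T := ({v ∈ S | f v = true} : Finset Q)
  set F := ({v ∈ S | f v = false} : Finset Q)
  have hS : #T + #F = #S := by
    have := card_filter_add_card_filter_not (s := S) (fun v => f v = true)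
    simpa [T, F] using this
  have hd : Disjoint (T ×ˢ F) (F ×ˢ T) := by
    rw [disjoint_left]
    rintro ⟨a, b⟩ h1 h2
    simp only [T, F, mem_product, mem_filter] at h1 h2
    simp_all
  have hsub : (T ×ˢ F).disjUnion (F ×ˢ T) hd ⊆ ({e ∈ S ×ˢ S | f e.1 ≠ f e.2} : Finset _) := by
    rintro ⟨a, b⟩ h
    simp only [T, F, mem_disjUnion, mem_product, mem_filter] at h ⊢
    rcases h with ⟨⟨h1, h2⟩, h3, h4⟩ | ⟨⟨h1, h2⟩, h3, h4⟩ <;> simp [*]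
  have := card_le_card hsub
  rw [card_disjUnion, card_product, card_product] at this
  refine le_trans ?_ this
  rw [← hS]
  change (#T + #F) * min #T #F ≤ _
  rcases le_total #T #F with h | h
  · rw [min_eq_left h]; nlinarith
  · rw [min_eq_right h]; nlinarith

/-- In a partial linear space there is a colouring for which every large vertex set spans a vertex
of proportionally large degree. -/
theorem exists_large_degree (hr : ∀ v, #{l | On v l} = r) (hL : 0 < Fintype.card L)
    (hlin : ∀ u v l m, u ≠ v → On u l → On v l → On u m → On v m → l = m)
    (hn : Fintype.card P * (49 / 50 : ℝ) ^ r ≤ 1 / 2) :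
    ∃ χ : L → P → Bool, ∀ X : Finset P, 10 * Fintype.card L ≤ r * #X →
      ∃ v ∈ X, r ^ 2 * #X ≤ 32 * Fintype.card L * #{w ∈ X | (bipGraph On χ).Adj v w} := by
  obtain ⟨χ, hχ⟩ := exists_colouring hr hL hn
  refine ⟨χ, fun X hX => ?_⟩
  have h := hχ X hX
  have hdeg : ∑ l ∈ rich On r X, #{v ∈ X | On v l} * minority {v ∈ X | On v l} (χ l)
      ≤ ∑ v ∈ X, #{w ∈ X | (bipGraph On χ).Adj v w} := by
    have e1 : ∑ v ∈ X, #{w ∈ X | (bipGraph On χ).Adj v w}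
        = #{e ∈ X ×ˢ X | (bipGraph On χ).Adj e.1 e.2} := by
      simp only [card_filter, sum_product]
    rw [e1]
    calc _ ≤ ∑ l ∈ rich On r X,
          #{e ∈ ({v ∈ X | On v l} : Finset P) ×ˢ ({v ∈ X | On v l} : Finset P) |
            χ l e.1 ≠ χ l e.2} := sum_le_sum fun l _ => card_pairs _ _
      _ = #((rich On r X).biUnion fun l =>
          {e ∈ ({v ∈ X | On v l} : Finset P) ×ˢ ({v ∈ X | On v l} : Finset P) |
            χ l e.1 ≠ χ l e.2}) := by
          rw [card_biUnion]
          intro l _ m _ hlm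
          refine disjoint_left.2 ?_
          rintro ⟨u, v⟩ h1 h2
          simp only [mem_filter, mem_product] at h1 h2
          refine hlm (hlin u v l m ?_ h1.1.1.2 h1.1.2.2 h2.1.1.2 h2.1.2.2)
          rintro rfl
          exact h1.2 rfl
      _ ≤ _ := by
          refine card_le_card ?_
          rintro ⟨u, v⟩ h1
          simp only [mem_biUnion, mem_filter, mem_product] at h1 ⊢
          obtain ⟨l, -, h1⟩ := h1
          exact ⟨⟨h1.1.1.1, h1.1.2.1⟩, l, h1.1.1.2, h1.1.2.2, h1.2⟩
  have hmul : r * #X * ∑ l ∈ rich On r X, minority {v ∈ X | On v l} (χ l)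
      ≤ 2 * Fintype.card L * ∑ v ∈ X, #{w ∈ X | (bipGraph On χ).Adj v w} := by
    refine le_trans ?_ (Nat.mul_le_mul_left _ hdeg)
    rw [mul_sum, mul_sum]
    refine sum_le_sum fun l hl => ?_
    rw [← mul_assoc]
    simp only [rich, mem_filter, mem_univ, true_and] at hl
    exact Nat.mul_le_mul_right _ hl
  by_contra! H
  have hne : X.Nonempty := by
    rw [nonempty_iff_ne_empty]; rintro rfl
    simp at hX; omega
  have hlt : ∑ v ∈ X, 32 * Fintype.card L * #{w ∈ X | (bipGraph On χ).Adj v w}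
      < ∑ v ∈ X, r ^ 2 * #X := sum_lt_sum_of_nonempty hne H
  rw [sum_const, ← mul_sum, smul_eq_mul] at hlt
  nlinarith [Nat.mul_le_mul_left (r * #X) h]

end Colouring

/-! ### Counting independent sets -/

section Count

open Finset Classical

variable {P : Type*}

/-- Independence polynomial of `H` restricted to `X`, evaluated at `x`. -/
noncomputable def indepPoly (H : SimpleGraph P) (x : ℝ) (X : Finset P) : ℝ :=
  ∑ I ∈ X.powerset with IsIndepFinset H I, x ^ #I

theorem indepPoly_le_exp (H : SimpleGraph P) {x R : ℝ} (hx : 0 ≤ x) {X : Finset P}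
    (hX : (#X : ℝ) ≤ R) : indepPoly H x X ≤ Real.exp (x * R) := by
  calc indepPoly H x X ≤ ∑ I ∈ X.powerset, x ^ #I := by
        refine sum_le_sum_of_subset_of_nonneg (filter_subset _ _) fun _ _ _ => by positivity
    _ = (x + 1) ^ #X := by simpa using sum_pow_mul_eq_add_pow x 1 X
    _ ≤ Real.exp x ^ #X := pow_le_pow_left₀ (by positivity) (Real.add_one_le_exp x) _
    _ = Real.exp (#X * x) := (Real.exp_nat_mul _ _).symm
    _ ≤ _ := by
        rw [mul_comm]
        exact Real.exp_le_exp.2 (mul_le_mul_of_nonneg_left hX hx)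

/-- Independent sets avoiding `v`, and those containing `v`, which avoid its neighbourhood. -/
theorem indepPoly_rec (H : SimpleGraph P) {x : ℝ} (hx : 0 ≤ x) {X : Finset P} {v : P} :
    indepPoly H x X ≤ indepPoly H x (X.erase v) + x * indepPoly H x {w ∈ X | ¬ H.Adj v w} := by
  rw [indepPoly, ← sum_filter_add_sum_filter_not _ (fun I => v ∈ I), add_comm]
  refine add_le_add (le_of_eq ?_) ?_
  · rw [indepPoly]
    refine sum_congr ?_ fun _ _ => rfl
    ext I
    simp only [mem_filter, mem_powerset, subset_erase]
    tauto
  · rw [indepPoly, mul_sum]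
    have hinj : Set.InjOn (fun I : Finset P => I.erase v)
        ({I ∈ X.powerset | IsIndepFinset H I}.filter fun I => v ∈ I : Finset _) := by
      intro I hI J hJ h
      simp only [coe_filter, Set.mem_ofPred_eq] at hI hJ
      rw [← insert_erase hI.2, ← insert_erase hJ.2]
      exact congrArg _ h
    calc _ = ∑ J ∈ ({I ∈ X.powerset | IsIndepFinset H I}.filter
            fun I => v ∈ I).image (fun I => I.erase v), x * x ^ #J := by
          rw [sum_image hinj]
          refine sum_congr rfl fun I hI => ?_
          rw [← pow_succ', card_erase_add_one (mem_filter.1 hI).2]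
      _ ≤ _ := by
          refine sum_le_sum_of_subset_of_nonneg ?_ fun _ _ _ => by positivity
          intro J hJ
          simp only [mem_image, mem_filter, mem_powerset] at hJ ⊢
          obtain ⟨I, ⟨⟨hIX, hI⟩, hvI⟩, rfl⟩ := hJ
          refine ⟨fun w hw => ?_, fun a ha b hb => hI a (mem_of_mem_erase ha) b (mem_of_mem_erase hb)⟩
          have hw' := mem_of_mem_erase hw
          exact mem_filter.2 ⟨hIX hw', hI v hvI w hw'⟩

/-- If every set of size at least `R` spans a vertex of degree at least `β` times its size, then the
independence polynomial of a set of size `s` is at most `e^{xR} s^K`. Induction on the set through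
`indepPoly_rec`: removing a vertex loses `s^(K-1)`, which pays for the term with the neighbourhood
removed because `x s (1-β)^K ≤ 1`. -/
theorem indepPoly_le (H : SimpleGraph P) {x R β n : ℝ} {K : ℕ} (hx : 0 ≤ x) (hβ : 0 < β)
    (hβ1 : β ≤ 1) (hK : 1 ≤ K) (hxK : x * n * (1 - β) ^ K ≤ 1)
    (hdeg : ∀ X : Finset P, R ≤ #X → ∃ v ∈ X, β * #X ≤ #{w ∈ X | H.Adj v w})
    (X : Finset P) (hne : X.Nonempty) (hX : (#X : ℝ) ≤ n) :
    indepPoly H x X ≤ Real.exp (x * R) * (#X : ℝ) ^ K := by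
  induction X using Finset.strongInduction with
  | H X ih =>
  have hX1 : (1 : ℝ) ≤ #X := by exact_mod_cast hne.card_pos
  by_cases hR : (#X : ℝ) ≤ R
  · exact (indepPoly_le_exp H hx hR).trans
      (le_mul_of_one_le_right (Real.exp_pos _).le (one_le_pow₀ hX1))
  obtain ⟨v, hv, hd⟩ := hdeg X (not_le.1 hR).le
  have hpos : (0 : ℝ) < #{w ∈ X | H.Adj v w} := lt_of_lt_of_le (by positivity) hd
  have hpos' : 0 < #{w ∈ X | H.Adj v w} := by exact_mod_cast hpos
  obtain ⟨w, hw⟩ := card_pos.1 hpos'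
  rw [mem_filter] at hw
  have hc := card_filter_add_card_filter_not (s := X) (fun w => H.Adj v w)
  have hc' : (#{w ∈ X | H.Adj v w} : ℝ) + #{w ∈ X | ¬ H.Adj v w} = #X := by exact_mod_cast hc
  have i1 := ih (X.erase v) (erase_ssubset hv)
    ⟨w, mem_erase.2 ⟨fun h => H.loopless.irrefl v (h ▸ hw.2), hw.1⟩⟩
    (le_trans (by exact_mod_cast card_le_card (erase_subset _ _)) hX)
  have i2 := ih {w ∈ X | ¬ H.Adj v w} (filter_ssubset.2 ⟨w, hw.1, by simpa using hw.2⟩)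
    ⟨v, mem_filter.2 ⟨hv, H.loopless.irrefl v⟩⟩ (le_trans (by linarith) hX)
  have hcard : (#(X.erase v) : ℝ) = #X - 1 := by
    rw [card_erase_of_mem hv, Nat.cast_sub hne.card_pos]; simp
  set s : ℝ := (#X : ℝ)
  set E := Real.exp (x * R)
  have hE : 0 < E := Real.exp_pos _
  rw [hcard] at i1
  have e1 : (s - 1) ^ K ≤ s ^ K - s ^ (K - 1) := by
    obtain ⟨k, rfl⟩ := Nat.exists_eq_add_of_le' hK
    have : (s - 1) ^ k ≤ s ^ k := pow_le_pow_left₀ (by linarith) (by linarith) _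
    rw [Nat.add_sub_cancel, pow_succ, pow_succ]
    nlinarith [pow_nonneg (by linarith : 0 ≤ s) k]
  have e2 : x * (#{w ∈ X | ¬ H.Adj v w} : ℝ) ^ K ≤ s ^ (K - 1) := by
    obtain ⟨k, rfl⟩ := Nat.exists_eq_add_of_le' hK
    calc x * (#{w ∈ X | ¬ H.Adj v w} : ℝ) ^ (k + 1) ≤ x * ((1 - β) * s) ^ (k + 1) := by
          refine mul_le_mul_of_nonneg_left (pow_le_pow_left₀ (by positivity) (by linarith) _) hx
      _ = (x * s * (1 - β) ^ (k + 1)) * s ^ k := by rw [mul_pow]; ring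
      _ ≤ (x * n * (1 - β) ^ (k + 1)) * s ^ k := by
          have : 0 ≤ 1 - β := by linarith
          gcongr
      _ ≤ 1 * s ^ k := by gcongr
      _ = _ := by simp
  calc indepPoly H x X ≤ _ := indepPoly_rec H hx
    _ ≤ E * (s - 1) ^ K + x * (E * (#{w ∈ X | ¬ H.Adj v w} : ℝ) ^ K) := by gcongr
    _ = E * ((s - 1) ^ K + x * (#{w ∈ X | ¬ H.Adj v w} : ℝ) ^ K) := by ring
    _ ≤ E * s ^ K := by gcongr; linarith

/-- Few independent sets of size `t` in a graph all of whose large subsets span a vertex of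
proportionally large degree. -/
theorem card_indep_le [Fintype P] [Nonempty P] (H : SimpleGraph P) {x R β : ℝ} {K : ℕ} (hx : 0 < x)
    (hβ : 0 < β) (hβ1 : β ≤ 1) (hK : 1 ≤ K) (hxK : x * Fintype.card P * (1 - β) ^ K ≤ 1)
    (hdeg : ∀ X : Finset P, R ≤ #X → ∃ v ∈ X, β * #X ≤ #{w ∈ X | H.Adj v w}) (t : ℕ) :
    (#{I : Finset P | #I = t ∧ IsIndepFinset H I} : ℝ) * x ^ t
      ≤ Real.exp (x * R) * (Fintype.card P : ℝ) ^ K := by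
  have h := indepPoly_le H hx.le hβ hβ1 hK hxK hdeg univ univ_nonempty
    (by rw [card_univ])
  rw [card_univ] at h
  refine le_trans ?_ h
  calc _ = ∑ I : Finset P with #I = t ∧ IsIndepFinset H I, x ^ #I := by
        rw [sum_congr rfl (g := fun _ => x ^ t) fun I hI => by rw [(mem_filter.1 hI).2.1]]
        rw [sum_const, nsmul_eq_mul]
    _ ≤ _ := by
        refine sum_le_sum_of_subset_of_nonneg ?_ fun _ _ _ => by positivity
        intro I hI
        simp only [mem_filter, mem_univ, true_and, mem_powerset, subset_univ] at hI ⊢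
        exact hI.2

theorem choose_sub_mul_pow_le {n N : ℕ} (hN : N ≤ n) (t : ℕ) (ht : t ≤ N) :
    (n - t).choose (N - t) * n ^ t ≤ n.choose N * N ^ t := by
  induction t with
  | zero => simp
  | succ t ih =>
    obtain ⟨a, rfl⟩ := Nat.exists_eq_add_of_le hN
    obtain ⟨b, rfl⟩ := Nat.exists_eq_add_of_le ht
    have ih := ih (by omega)
    have e1 : t + 1 + b + a - t = (b + a) + 1 := by omega
    have e2 : t + 1 + b - t = b + 1 := by omega
    have e3 : t + 1 + b + a - (t + 1) = b + a := by omega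
    have e4 : t + 1 + b - (t + 1) = b := by omega
    rw [e1, e2] at ih
    rw [e3, e4]
    have h := Nat.add_one_mul_choose_eq (b + a) b
    have h2 : (b + a).choose b * (t + 1 + b + a)
        ≤ (b + a + 1).choose (b + 1) * (t + 1 + b) := by
      refine le_of_mul_le_mul_left ?_ (Nat.succ_pos (b + a))
      rw [Nat.succ_eq_add_one]
      calc (b + a + 1) * ((b + a).choose b * (t + 1 + b + a))
          = (b + a + 1).choose (b + 1) * ((b + 1) * (t + 1 + b + a)) := by rw [← mul_assoc, h]; ring
        _ ≤ (b + a + 1).choose (b + 1) * ((b + a + 1) * (t + 1 + b)) := by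
          refine Nat.mul_le_mul_left _ ?_
          nlinarith
        _ = _ := by ring
    calc _ = ((b + a).choose b * (t + 1 + b + a)) * (t + 1 + b + a) ^ t := by ring
      _ ≤ ((b + a + 1).choose (b + 1) * (t + 1 + b)) * (t + 1 + b + a) ^ t :=
        Nat.mul_le_mul_right _ h2
      _ = ((b + a + 1).choose (b + 1) * (t + 1 + b + a) ^ t) * (t + 1 + b) := by ring
      _ ≤ ((t + 1 + b + a).choose (t + 1 + b) * (t + 1 + b) ^ t) * (t + 1 + b) :=
        Nat.mul_le_mul_right _ ih
      _ = _ := by ring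

/-- First moment: a random `N`-subset of `P` contains each `t`-set with probability at most
`(N/n)^t`. -/
theorem exists_subset_avoiding [Fintype P] (F : Finset (Finset P)) {t N : ℕ}
    (hF : ∀ I ∈ F, #I = t) (hN : N ≤ Fintype.card P)
    (h : (#F : ℝ) * ((N : ℝ) / Fintype.card P) ^ t < 1) :
    ∃ W : Finset P, #W = N ∧ ∀ I ∈ F, ¬ I ⊆ W := by
  set n := Fintype.card P with hn
  -- the count of `N`-sets containing a given `t`-set
  have key : ∀ I ∈ F, (#{W ∈ powersetCard N (univ : Finset P) | I ⊆ W} : ℝ)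
      ≤ n.choose N * ((N : ℝ) / n) ^ t := by
    intro I hI
    by_cases htN : t ≤ N
    · have hle : #{W ∈ powersetCard N (univ : Finset P) | I ⊆ W} ≤ (n - t).choose (N - t) := by
        have h1 : #(powersetCard (N - t) Iᶜ) = (n - t).choose (N - t) := by
          rw [card_powersetCard, card_compl, hF I hI]
        rw [← h1]
        refine card_le_card_of_injOn (fun W => W \ I) ?_ ?_
        · intro W hW
          simp only [coe_filter, Set.mem_ofPred_eq, mem_powersetCard, subset_univ, true_and] at hW
          simp only [mem_powersetCard, mem_coe]
          refine ⟨fun w hw => mem_compl.2 (mem_sdiff.1 hw).2, ?_⟩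
          rw [card_sdiff_of_subset hW.2, hW.1, hF I hI]
        · intro W hW V hV hWV
          simp only [coe_filter, Set.mem_ofPred_eq] at hW hV
          rw [← sdiff_union_of_subset hW.2, ← sdiff_union_of_subset hV.2]
          exact congrArg (· ∪ I) hWV
      rw [div_pow, ← mul_div_assoc]
      have hI := card_le_univ I
      by_cases hn0 : n = 0
      · obtain rfl : N = 0 := by omega
        obtain rfl : t = 0 := by omega
        simpa [hn0] using hle
      rw [le_div_iff₀ (by positivity)]
      calc _ ≤ ((n - t).choose (N - t) : ℝ) * (n : ℝ) ^ t := by gcongr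
        _ ≤ _ := by exact_mod_cast choose_sub_mul_pow_le hN t htN
    · have : ({W ∈ powersetCard N (univ : Finset P) | I ⊆ W} : Finset _) = ∅ := by
        refine filter_eq_empty_iff.2 fun W hW hIW => htN ?_
        rw [← hF I hI, ← (mem_powersetCard.1 hW).2]
        exact card_le_card hIW
      rw [this, card_empty, Nat.cast_zero]
      positivity
  by_contra! H
  have hcov : powersetCard N (univ : Finset P) ⊆
      F.biUnion fun I => {W ∈ powersetCard N (univ : Finset P) | I ⊆ W} := by
    intro W hW
    obtain ⟨I, hI, hIW⟩ := H W (mem_powersetCard.1 hW).2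
    exact mem_biUnion.2 ⟨I, hI, mem_filter.2 ⟨hW, hIW⟩⟩
  have h1 : (n.choose N : ℝ) ≤ ∑ I ∈ F, (#{W ∈ powersetCard N (univ : Finset P) | I ⊆ W} : ℝ) := by
    have := (card_le_card hcov).trans card_biUnion_le
    rw [card_powersetCard, card_univ] at this
    exact_mod_cast this
  have h2 := h1.trans (sum_le_sum key)
  rw [sum_const, nsmul_eq_mul] at h2
  have hc : (0 : ℝ) < n.choose N := by exact_mod_cast Nat.choose_pos hN
  nlinarith

end Count

/-! ### The Ramsey number of the pentagon -/

section Ramsey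

open Finset Classical

/-- Ramsey's theorem for cliques of size `s` and independent sets of size `t`. -/
theorem finite_ramsey (s t : ℕ) : ∃ n : ℕ, ∀ {V : Type} (G : SimpleGraph V) (X : Finset V), n ≤ #X →
    (∃ A ⊆ X, #A = s ∧ ∀ u ∈ A, ∀ v ∈ A, u ≠ v → G.Adj u v) ∨
    (∃ I ⊆ X, #I = t ∧ IsIndepFinset G I) := by
  induction s generalizing t with
  | zero => exact ⟨0, fun G X _ => Or.inl ⟨∅, by simp⟩⟩
  | succ s ihs =>
    induction t with
    | zero => exact ⟨0, fun G X _ => Or.inr ⟨∅, by simp [IsIndepFinset]⟩⟩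
    | succ t iht =>
      obtain ⟨a, ha⟩ := ihs (t + 1)
      obtain ⟨b, hb⟩ := iht
      refine ⟨a + b + 1, fun {V} G X hX => ?_⟩
      obtain ⟨v, hv⟩ : X.Nonempty := card_pos.1 (by omega)
      have hc := card_filter_add_card_filter_not (s := X.erase v) (fun w => G.Adj v w)
      rw [card_erase_of_mem hv] at hc
      have hcase : a ≤ #{w ∈ X.erase v | G.Adj v w} ∨ b ≤ #{w ∈ X.erase v | ¬ G.Adj v w} := by
        omega
      have hsub : ∀ (p : V → Prop) [DecidablePred p], {w ∈ X.erase v | p w} ⊆ X := fun p _ =>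
        (filter_subset _ _).trans (erase_subset _ _)
      have hvn : ∀ (p : V → Prop) [DecidablePred p] (A : Finset V), A ⊆ {w ∈ X.erase v | p w} → v ∉ A := by
        intro p _ A hA h
        exact (mem_erase.1 (mem_filter.1 (hA h)).1).1 rfl
      rcases hcase with h | h
      · rcases ha G _ h with ⟨A, hA, hcard, hcl⟩ | ⟨I, hI, hcard, hi⟩
        · refine Or.inl ⟨insert v A, insert_subset hv (hA.trans (hsub _)), ?_, ?_⟩
          · rw [card_insert_of_notMem (hvn _ _ hA), hcard]
          · have hadj : ∀ w ∈ A, G.Adj v w := fun w hw => (mem_filter.1 (hA hw)).2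
            intro x hx y hy hxy
            rcases mem_insert.1 hx with hxv | hx' <;> rcases mem_insert.1 hy with hyv | hy'
            · exact absurd (hxv.trans hyv.symm) hxy
            · exact hxv ▸ hadj y hy'
            · exact hyv ▸ (hadj x hx').symm
            · exact hcl x hx' y hy' hxy
        · exact Or.inr ⟨I, hI.trans (hsub _), hcard, hi⟩
      · rcases hb G _ h with ⟨A, hA, hcard, hcl⟩ | ⟨I, hI, hcard, hi⟩
        · exact Or.inl ⟨A, hA.trans (hsub _), hcard, hcl⟩
        · refine Or.inr ⟨insert v I, insert_subset hv (hI.trans (hsub _)), ?_, ?_⟩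
          · rw [card_insert_of_notMem (hvn _ _ hI), hcard]
          · have hadj : ∀ w ∈ I, ¬ G.Adj v w := fun w hw => (mem_filter.1 (hI hw)).2
            intro x hx y hy
            rcases mem_insert.1 hx with hxv | hx' <;> rcases mem_insert.1 hy with hyv | hy'
            · rw [hxv, hyv]
              exact G.loopless.irrefl _
            · exact hxv ▸ hadj y hy'
            · exact fun h => hadj x hx' (hyv ▸ h.symm)
            · exact hi x hx' y hy'

/-- The infimum defining `ramseyF` for the pentagon is over a nonempty set, hence is attained. -/
theorem ramsey_set_nonempty (t : ℕ) : {n : ℕ | ∀ G : SimpleGraph (Fin n),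
    FFree (SimpleGraph.cycleGraph 5) G →
      ∃ I : Finset (Fin n), I.card = t ∧ IsIndepFinset G I}.Nonempty := by
  obtain ⟨n, hn⟩ := finite_ramsey 5 t
  refine ⟨n, fun G hG => ?_⟩
  rcases hn G univ (by simp) with ⟨A, -, hA, hcl⟩ | ⟨I, -, hI⟩
  · refine (hG ⟨⟨fun i => A.orderEmbOfFin hA i, fun {i j} hij => ?_⟩, ?_⟩).elim
    · exact hcl _ (orderEmbOfFin_mem _ _ _) _ (orderEmbOfFin_mem _ _ _)
        ((A.orderEmbOfFin hA).injective.ne hij.ne)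
    · exact (A.orderEmbOfFin hA).injective
  · exact ⟨I, hI⟩

/-- A set `W` of vertices of a pentagon-free graph containing no independent `t`-set bounds the
Ramsey number from below; by monotonicity, any smaller order than `#W` fails as well. -/
theorem lt_ramseyF {P : Type*} {G : SimpleGraph P} (hG : FFree (SimpleGraph.cycleGraph 5) G)
    {t : ℕ} (W : Finset P) (hI : ∀ I ⊆ W, #I = t → ¬ IsIndepFinset G I) :
    #W < ramseyF (SimpleGraph.cycleGraph 5) t := by
  have hmem := Nat.sInf_mem (ramsey_set_nonempty t)
  rw [ramseyF]
  by_contra! hle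
  set n := sInf {n : ℕ | ∀ G : SimpleGraph (Fin n), FFree (SimpleGraph.cycleGraph 5) G →
      ∃ I : Finset (Fin n), I.card = t ∧ IsIndepFinset G I}
  let f : Fin n ↪ P := (Fin.castLEEmb hle).trans
    (W.equivFin.symm.toEmbedding.trans (Function.Embedding.subtype _))
  have hf : ∀ i, f i ∈ W := fun i => (W.equivFin.symm _).2
  obtain ⟨I, hcard, hind⟩ := hmem (G.comap f) (by
    rintro ⟨φ, hφ⟩
    exact hG ⟨⟨fun i => f (φ i), fun h => φ.map_rel h⟩, f.injective.comp hφ⟩)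
  refine hI (I.map f) (fun x hx => ?_) (by rw [card_map, hcard]) ?_
  · obtain ⟨i, -, rfl⟩ := mem_map.1 hx
    exact hf i
  · intro x hx y hy
    obtain ⟨i, hi, rfl⟩ := mem_map.1 hx
    obtain ⟨j, hj, rfl⟩ := mem_map.1 hy
    exact hind i hi j hj

theorem one_le_ramseyF {t : ℕ} (ht : 3 ≤ t) : 1 ≤ ramseyF (SimpleGraph.cycleGraph 5) t := by
  refine lt_ramseyF (P := Fin 0) (G := ⊥) ?_ ∅ ?_
  · rintro ⟨φ, -⟩
    exact (φ 0).elim0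
  · intro I hI hc
    rw [subset_empty.1 hI] at hc
    simp at hc; omega

/-- A pentagon would have all its sides on a single line by `CycCubic.no5`, where the graph is
bipartite. -/
theorem CycCubic.bipGraph_free {F K : Type*} [Field F] [Field K] [Algebra F K] (D : CycCubic F K)
    (h2 : (2 : K) ≠ 0) [Fintype K] [Fintype F] (χ : F × K × K × F × F → K × K × K × F × F → Bool) :
    FFree (SimpleGraph.cycleGraph 5) (bipGraph D.On χ) := by
  rintro ⟨φ, hφ⟩
  have adj : ∀ i j : Fin 5, (SimpleGraph.cycleGraph 5).Adj i j → (bipGraph D.On χ).Adj (φ i) (φ j) :=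
    fun i j h => φ.map_rel h
  obtain ⟨l₁, a₁, b₁, c₁⟩ := adj 0 1 (by decide)
  obtain ⟨l₂, a₂, b₂, c₂⟩ := adj 1 2 (by decide)
  obtain ⟨l₃, a₃, b₃, c₃⟩ := adj 2 3 (by decide)
  obtain ⟨l₄, a₄, b₄, c₄⟩ := adj 3 4 (by decide)
  obtain ⟨l₅, a₅, b₅, c₅⟩ := adj 4 0 (by decide)
  obtain ⟨rfl, rfl, rfl, rfl⟩ := CycCubic.no5 h2 (hφ.ne (by decide)) (hφ.ne (by decide))
    (hφ.ne (by decide)) (hφ.ne (by decide)) (hφ.ne (by decide)) (hφ.ne (by decide))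
    (hφ.ne (by decide)) (hφ.ne (by decide)) (hφ.ne (by decide)) (hφ.ne (by decide))
    a₁ b₁ a₂ b₂ a₃ b₃ a₄ b₄ a₅ b₅
  -- a pentagon cannot be properly coloured with two colours
  revert c₁ c₂ c₃ c₄ c₅
  generalize χ l₁ (φ 0) = x0
  generalize χ l₁ (φ 1) = x1
  generalize χ l₁ (φ 2) = x2
  generalize χ l₁ (φ 3) = x3
  generalize χ l₁ (φ 4) = x4
  cases x0 <;> cases x1 <;> cases x2 <;> cases x3 <;> cases x4 <;> simp

/-- The pentagon-free graph on `p¹¹` points, where each point lies on `p` of the `p⁹` lines. -/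
theorem exists_graph (p : ℕ) [Fact p.Prime] (hp : p ≠ 2)
    (hθ : (p : ℝ) ^ 11 * (49 / 50 : ℝ) ^ p ≤ 1 / 2) :
    ∃ (P : Type) (_ : Fintype P) (G : SimpleGraph P), Fintype.card P = p ^ 11 ∧
      FFree (SimpleGraph.cycleGraph 5) G ∧
      ∀ X : Finset P, (10 * p ^ 8 : ℝ) ≤ #X →
        ∃ v ∈ X, 1 / (32 * (p : ℝ) ^ 7) * #X ≤ #{w ∈ X | G.Adj v w} := by
  have hpp := (Fact.out : p.Prime).pos
  let D := galoisCyc p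
  have : Fintype (GaloisField p 3) := Fintype.ofFinite _
  have h2 : (2 : GaloisField p 3) ≠ 0 := by
    intro h
    have h' : ((2 : ℕ) : GaloisField p 3) = 0 := by exact_mod_cast h
    rw [CharP.cast_eq_zero_iff _ p, Nat.prime_dvd_prime_iff_eq Fact.out Nat.prime_two] at h'
    exact hp h'
  have hK : Fintype.card (GaloisField p 3) = p ^ 3 := by
    rw [← Nat.card_eq_fintype_card, GaloisField.card p 3 (by norm_num)]
  have hP : Fintype.card (GaloisField p 3 × GaloisField p 3 × GaloisField p 3 × ZMod p × ZMod p)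
      = p ^ 11 := by
    simp only [Fintype.card_prod, hK, ZMod.card]; ring
  have hL : Fintype.card (ZMod p × GaloisField p 3 × GaloisField p 3 × ZMod p × ZMod p)
      = p ^ 9 := by
    simp only [Fintype.card_prod, hK, ZMod.card]; ring
  obtain ⟨χ, hχ⟩ := exists_large_degree (On := D.On) (r := p)
    (fun q => by
      have := D.card_lines q
      rw [ZMod.card] at this
      convert this)
    (by rw [hL]; positivity)
    (fun u v l m huv h1 h2 h3 h4 => CycCubic.no2 huv h1 h2 h4 h3)
    (by rw [hP]; exact_mod_cast hθ)
  refine ⟨_, inferInstance, bipGraph D.On χ, hP, D.bipGraph_free h2 χ, fun X hX => ?_⟩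
  have hX' : 10 * p ^ 8 ≤ #X := by exact_mod_cast hX
  rw [hL] at hχ
  obtain ⟨v, hv, h⟩ := hχ X (by
    calc 10 * p ^ 9 = p * (10 * p ^ 8) := by ring
      _ ≤ _ := Nat.mul_le_mul_left _ hX')
  refine ⟨v, hv, ?_⟩
  have h' : (p : ℝ) ^ 2 * #X ≤ 32 * (p : ℝ) ^ 9 * #{w ∈ X | (bipGraph D.On χ).Adj v w} := by
    exact_mod_cast h
  rw [div_mul_eq_mul_div, one_mul, div_le_iff₀ (by positivity)]
  have hp2 : (0 : ℝ) < (p : ℝ) ^ 2 := by positivity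
  refine le_of_mul_le_mul_left ?_ hp2
  linarith

/-- Independent-set counting and random sampling combined. -/
theorem lt_ramseyF_of_params (p t N K : ℕ) [Fact p.Prime] (hp : p ≠ 2)
    (hθ : (p : ℝ) ^ 11 * (49 / 50 : ℝ) ^ p ≤ 1 / 2) {x : ℝ} (hx : 0 < x) (hK : 1 ≤ K)
    (hxK : x * (p : ℝ) ^ 11 * (1 - 1 / (32 * (p : ℝ) ^ 7)) ^ K ≤ 1) (hN : N ≤ p ^ 11)
    (h : Real.exp (x * (10 * p ^ 8)) * ((p : ℝ) ^ 11) ^ K * ((N : ℝ) / (p : ℝ) ^ 11) ^ t < x ^ t) :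
    N < ramseyF (SimpleGraph.cycleGraph 5) t := by
  obtain ⟨P, _, G, hP, hG, hdeg⟩ := exists_graph p hp hθ
  have hp1 : (1 : ℝ) ≤ p := by exact_mod_cast (Fact.out : p.Prime).one_lt.le
  have hP' : (Fintype.card P : ℝ) = (p : ℝ) ^ 11 := by rw [hP]; push_cast; rfl
  have : Nonempty P := Fintype.card_pos_iff.1 (by rw [hP]; exact pow_pos (Fact.out : p.Prime).pos _)
  have hcount := card_indep_le G hx (β := 1 / (32 * (p : ℝ) ^ 7)) (by positivity)
    (by
      rw [div_le_one (by positivity)]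
      have : (1 : ℝ) ≤ (p : ℝ) ^ 7 := one_le_pow₀ hp1
      linarith) hK (by rw [hP']; exact hxK) hdeg t
  rw [hP'] at hcount
  obtain ⟨W, hW, hWF⟩ := exists_subset_avoiding
    ({I : Finset P | #I = t ∧ IsIndepFinset G I} : Finset _) (t := t) (N := N)
    (fun I hI => (mem_filter.1 hI).2.1) (by rw [hP]; exact hN) (by
      rw [hP']
      have hxt : 0 < x ^ t := by positivity
      refine lt_of_mul_lt_mul_right ?_ hxt.le
      rw [one_mul]
      refine lt_of_le_of_lt ?_ h
      calc _ = (_ * x ^ t) * ((N : ℝ) / (p : ℝ) ^ 11) ^ t := by ring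
        _ ≤ _ := mul_le_mul_of_nonneg_right hcount (by positivity))
  rw [← hW]
  refine lt_ramseyF hG W fun I hIW hcard hind => hWF I ?_ hIW
  exact mem_filter.2 ⟨mem_univ _, hcard, hind⟩

end Ramsey

/-! ### Choice of parameters -/

section Asymptotics

open Filter

/-- The parameters: `β = 1/(32p⁷)`, `K ≈ 64 p⁷ log t`, `x = t/(10p⁸)` and `N ≈ p³t/100`. Then each of
the two factors in the bound for the independence polynomial is at most `e^t`, while the sampling
factor is `(x/10)^t`, and `e² < 10`. -/
theorem le_ramseyF_of_prime (p t : ℕ) [Fact p.Prime] (hp : p ≠ 2)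
    (hθ : (p : ℝ) ^ 11 * (49 / 50 : ℝ) ^ p ≤ 1 / 2) (ht : 3 ≤ t) (hl : 1 ≤ Real.log t)
    (h1 : 130 * (p : ℝ) ^ 7 * Real.log t ^ 2 ≤ t) (h2 : (t : ℝ) ≤ 100 * (p : ℝ) ^ 8) :
    (p : ℝ) ^ 3 * t / 100 ≤ ramseyF (SimpleGraph.cycleGraph 5) t := by
  have hp1 : (1 : ℝ) ≤ p := by exact_mod_cast (Fact.out : p.Prime).one_lt.le
  have hp0 : (0 : ℝ) < p := by linarith
  have ht0 : (0 : ℝ) < t := by positivity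
  have hp7 : (1 : ℝ) ≤ (p : ℝ) ^ 7 := one_le_pow₀ hp1
  set l := Real.log t with hldef
  have hl2 : 1 ≤ l ^ 2 := one_le_pow₀ hl
  have hp7t : (p : ℝ) ^ 7 ≤ t := by nlinarith
  have hexp : Real.exp l = t := Real.exp_log ht0
  set K := ⌈64 * (p : ℝ) ^ 7 * l⌉₊
  have hpl : 1 ≤ (p : ℝ) ^ 7 * l := by nlinarith
  have hK1 : 64 * (p : ℝ) ^ 7 * l ≤ K := Nat.le_ceil _
  have hK2 : (K : ℝ) ≤ 65 * (p : ℝ) ^ 7 * l := by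
    have := Nat.ceil_lt_add_one (a := 64 * (p : ℝ) ^ 7 * l) (by positivity)
    linarith
  set N := ⌊(p : ℝ) ^ 3 * t / 100⌋₊
  have hN : (N : ℝ) ≤ (p : ℝ) ^ 3 * t / 100 := Nat.floor_le (by positivity)
  have hlog : 7 * Real.log p ≤ l := by
    rw [hldef, ← Real.log_rpow hp0] 
    · exact Real.log_le_log (by positivity) (by exact_mod_cast hp7t)
  have hlt : N < ramseyF (SimpleGraph.cycleGraph 5) t := by
    refine lt_ramseyF_of_params p t N K hp hθ (x := t / (10 * (p : ℝ) ^ 8)) (by positivity) ?_ ?_ ?_ ?_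
    · have : (1 : ℝ) ≤ K := by nlinarith
      exact_mod_cast this
    · -- `(1 - β)^K ≤ exp (-2 log t) = t⁻²`
      have e1 : (1 - 1 / (32 * (p : ℝ) ^ 7)) ^ K ≤ Real.exp (-(2 * l)) := by
        have hb : 1 / (32 * (p : ℝ) ^ 7) ≤ 1 := by
          rw [div_le_one (by positivity)]; linarith
        calc (1 - 1 / (32 * (p : ℝ) ^ 7)) ^ K ≤ Real.exp (-(1 / (32 * (p : ℝ) ^ 7))) ^ K :=
              pow_le_pow_left₀ (by linarith) (by linarith [Real.add_one_le_exp (-(1 / (32 * (p : ℝ) ^ 7)))]) _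
          _ = Real.exp (K * -(1 / (32 * (p : ℝ) ^ 7))) := (Real.exp_nat_mul _ _).symm
          _ ≤ _ := by
              refine Real.exp_le_exp.2 ?_
              rw [mul_neg, neg_le_neg_iff, mul_one_div, le_div_iff₀ (by positivity)]
              linarith
      have e2 : Real.exp (-(2 * l)) = ((t : ℝ) ^ 2)⁻¹ := by
        rw [Real.exp_neg, two_mul, Real.exp_add, hexp, pow_two]
      have e3 : (t : ℝ) / (10 * (p : ℝ) ^ 8) * (p : ℝ) ^ 11 ≤ (t : ℝ) ^ 2 := by
        have : (t : ℝ) / (10 * (p : ℝ) ^ 8) * (p : ℝ) ^ 11 = t * (p : ℝ) ^ 3 / 10 := by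
          field_simp
        rw [this]
        have hp3 : (p : ℝ) ^ 3 ≤ (p : ℝ) ^ 7 := pow_le_pow_right₀ hp1 (by norm_num)
        nlinarith
      calc _ ≤ (t : ℝ) ^ 2 * ((t : ℝ) ^ 2)⁻¹ := by
            rw [← e2]
            refine mul_le_mul e3 e1 (pow_nonneg ?_ _) (by positivity)
            rw [sub_nonneg, div_le_one (by positivity)]; linarith
        _ = 1 := mul_inv_cancel₀ (by positivity)
    · have : (N : ℝ) ≤ (p : ℝ) ^ 11 := by
        calc (N : ℝ) ≤ (p : ℝ) ^ 3 * t / 100 := hN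
          _ ≤ (p : ℝ) ^ 3 * (100 * (p : ℝ) ^ 8) / 100 := by gcongr
          _ = _ := by ring
      exact_mod_cast this
    · set x : ℝ := t / (10 * (p : ℝ) ^ 8) with hx
      have hx0 : 0 < x := by positivity
      have e1 : x * (10 * (p : ℝ) ^ 8) = t := by rw [hx]; field_simp
      have e2 : ((p : ℝ) ^ 11) ^ K ≤ Real.exp t := by
        have : (p : ℝ) ^ 11 = Real.exp (11 * Real.log p) := by
          rw [show (11 : ℝ) = ((11 : ℕ) : ℝ) by norm_num, Real.exp_nat_mul, Real.exp_log hp0]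
        rw [this, ← Real.exp_nat_mul]
        refine Real.exp_le_exp.2 ?_
        have hlp : 11 * Real.log p ≤ 2 * l := by linarith
        calc (K : ℝ) * (11 * Real.log p) ≤ K * (2 * l) := by gcongr
          _ ≤ 65 * (p : ℝ) ^ 7 * l * (2 * l) := by gcongr
          _ = 130 * (p : ℝ) ^ 7 * l ^ 2 := by ring
          _ ≤ t := h1
      have e3 : (N : ℝ) / (p : ℝ) ^ 11 ≤ x / 10 := by
        rw [div_le_iff₀ (by positivity)]
        refine hN.trans (le_of_eq ?_)
        rw [hx]; field_simp; norm_num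
      have e4 : Real.exp t = Real.exp 1 ^ t := by
        rw [← Real.exp_nat_mul, mul_one]
      have e5 := Real.exp_one_lt_d9
      have e6 := Real.exp_pos 1
      rw [e1]
      calc Real.exp t * ((p : ℝ) ^ 11) ^ K * ((N : ℝ) / (p : ℝ) ^ 11) ^ t
          ≤ Real.exp t * Real.exp t * (x / 10) ^ t := by gcongr
        _ = (Real.exp 1 * Real.exp 1 * (x / 10)) ^ t := by
            rw [e4, mul_pow, mul_pow]
        _ < x ^ t := by
            refine pow_lt_pow_left₀ ?_ (by positivity) (by omega)
            have : Real.exp 1 * Real.exp 1 < 10 := by nlinarith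
            nlinarith
  have h3 : (p : ℝ) ^ 3 * t / 100 < N + 1 := Nat.lt_floor_add_one _
  have h4 : (N : ℝ) + 1 ≤ ramseyF (SimpleGraph.cycleGraph 5) t := by exact_mod_cast hlt
  linarith

theorem exists_prime_threshold : ∃ p₀ : ℕ, ∀ p : ℕ, p₀ ≤ p →
    (p : ℝ) ^ 11 * (49 / 50 : ℝ) ^ p ≤ 1 / 2 := by
  have h := tendsto_pow_const_mul_const_pow_of_abs_lt_one 11 (r := (49 / 50 : ℝ))
    (by rw [abs_of_pos] <;> norm_num)
  exact eventually_atTop.1 (h.eventually_le_const (by norm_num))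

theorem eventually_large (C p₀ : ℝ) : ∃ t₀ : ℕ, ∀ t : ℕ, t₀ ≤ t →
    C * Real.log t ^ 16 ≤ t ∧ p₀ ≤ Real.log t := by
  have h1 : ∀ᶠ x : ℝ in atTop, |C| * |Real.log x ^ 16| ≤ |x| := by
    have := (Real.isLittleO_pow_log_id_atTop (n := 16)).const_mul_left |C|
    filter_upwards [this.bound one_pos] with x hx
    simpa [abs_mul] using hx
  have h2 : ∀ᶠ x : ℝ in atTop, p₀ ≤ Real.log x := Real.tendsto_log_atTop.eventually_ge_atTop _
  obtain ⟨t₀, ht₀⟩ := eventually_atTop.1 (tendsto_natCast_atTop_atTop.eventually (h1.and h2))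
  refine ⟨t₀, fun t ht => ⟨?_, (ht₀ t ht).2⟩⟩
  have := (ht₀ t ht).1
  rw [← abs_mul, abs_of_nonneg (Nat.cast_nonneg t : (0 : ℝ) ≤ (t : ℝ))] at this
  exact (le_abs_self _).trans this

/-- For large `t`, Bertrand's postulate supplies a prime `p` within a factor two below
`y = (t / (130 (log t)²))^(1/7)`. -/
theorem large_case : ∃ t₀ : ℕ, ∀ t : ℕ, 3 ≤ t → t₀ ≤ t → 1 ≤ Real.log t →
    1 / 104000 * (t : ℝ) ^ ((10 : ℝ) / 7) / (Real.log t) ^ ((13 : ℝ) / 7)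
      ≤ (ramseyF (SimpleGraph.cycleGraph 5) t : ℝ) := by
  obtain ⟨p₀, hp₀⟩ := exists_prime_threshold
  obtain ⟨t₀, ht₀⟩ := eventually_large (130 * 334 ^ 7) p₀
  refine ⟨t₀, fun t ht3 ht hl => ?_⟩
  obtain ⟨h1, h2⟩ := ht₀ t ht
  set l := Real.log t
  have ht0 : (0 : ℝ) < t := by positivity
  have hl0 : 0 < l := by linarith
  set y : ℝ := ((t : ℝ) / (130 * l ^ 2)) ^ ((1 : ℝ) / 7) with hy
  have hbase : 0 ≤ (t : ℝ) / (130 * l ^ 2) := by positivity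
  have hy0 : 0 ≤ y := by positivity
  have hy7 : y ^ 7 = (t : ℝ) / (130 * l ^ 2) := by
    rw [hy, ← Real.rpow_natCast, ← Real.rpow_mul hbase]; norm_num
  have hyl : 334 * l ^ 2 ≤ y := by
    refine le_of_pow_le_pow_left₀ (n := 7) (by norm_num) hy0 ?_
    rw [hy7, le_div_iff₀ (by positivity)]
    calc _ = 130 * 334 ^ 7 * l ^ 16 := by ring
      _ ≤ t := h1
  have hl2 : l ≤ l ^ 2 := by nlinarith
  set n := ⌊y / 2⌋₊
  have hn0 : n ≠ 0 := by
    have : 1 ≤ n := Nat.le_floor (by push_cast; linarith)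
    omega
  obtain ⟨p, hp, hnp, hpn⟩ := Nat.exists_prime_lt_and_le_two_mul n hn0
  have hpy : (p : ℝ) ≤ y := by
    have h3 : (n : ℝ) ≤ y / 2 := Nat.floor_le (by positivity)
    have h4 : (p : ℝ) ≤ 2 * n := by exact_mod_cast hpn
    linarith
  have hyp : y / 2 ≤ p := by
    have h3 : y / 2 < n + 1 := Nat.lt_floor_add_one _
    have h4 : (n : ℝ) + 1 ≤ p := by exact_mod_cast hnp
    linarith
  have : Fact p.Prime := ⟨hp⟩
  have hp167 : 167 * l ^ 2 ≤ p := by linarith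
  have hp2 : p ≠ 2 := by
    rintro rfl
    push_cast at hp167; nlinarith
  have hpp : p₀ ≤ p := by
    have : (p₀ : ℝ) ≤ p := by nlinarith
    exact_mod_cast this
  have hty : (t : ℝ) = 130 * l ^ 2 * y ^ 7 := by rw [hy7]; field_simp
  have hmain := le_ramseyF_of_prime p t hp2 (hp₀ p hpp) ht3 hl
    (by
      calc 130 * (p : ℝ) ^ 7 * l ^ 2 ≤ 130 * y ^ 7 * l ^ 2 := by gcongr
        _ = (t : ℝ) := by linarith)
    (by
      calc (t : ℝ) = 130 * l ^ 2 * y ^ 7 := hty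
        _ ≤ 130 * l ^ 2 * (2 * p) ^ 7 := by gcongr; linarith
        _ = (130 * 128 * l ^ 2) * (p : ℝ) ^ 7 := by ring
        _ ≤ (100 * p) * (p : ℝ) ^ 7 :=
            mul_le_mul_of_nonneg_right (by linarith) (by positivity)
        _ = _ := by ring)
  refine le_trans ?_ hmain
  have hy3 : (t : ℝ) ^ ((3 : ℝ) / 7) / (130 * l ^ ((13 : ℝ) / 7)) ≤ y ^ 3 := by
    have e1 : y ^ 3 = (t : ℝ) ^ ((3 : ℝ) / 7) / (130 * l ^ 2) ^ ((3 : ℝ) / 7) := by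
      rw [hy, ← Real.rpow_natCast, ← Real.rpow_mul hbase, Real.div_rpow ht0.le (by positivity)]
      norm_num
    rw [e1]
    have e2 : (130 * l ^ 2) ^ ((3 : ℝ) / 7) ≤ 130 * l ^ ((13 : ℝ) / 7) := by
      rw [Real.mul_rpow (by norm_num) (by positivity), ← Real.rpow_natCast, ← Real.rpow_mul hl0.le]
      refine mul_le_mul ?_ ?_ (by positivity) (by norm_num)
      · calc (130 : ℝ) ^ ((3 : ℝ) / 7) ≤ 130 ^ (1 : ℝ) :=
            Real.rpow_le_rpow_of_exponent_le (by norm_num) (by norm_num)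
          _ = 130 := Real.rpow_one _
      · exact Real.rpow_le_rpow_of_exponent_le hl (by norm_num)
    gcongr
  have ht107 : (t : ℝ) ^ ((10 : ℝ) / 7) = (t : ℝ) ^ ((3 : ℝ) / 7) * t := by
    rw [show (10 : ℝ) / 7 = 3 / 7 + 1 by norm_num, Real.rpow_add_one ht0.ne']
  have hlp : 0 < l ^ ((13 : ℝ) / 7) := by positivity
  calc 1 / 104000 * (t : ℝ) ^ ((10 : ℝ) / 7) / l ^ ((13 : ℝ) / 7)
      = (t : ℝ) ^ ((3 : ℝ) / 7) / (130 * l ^ ((13 : ℝ) / 7)) * t / 800 := by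
        rw [ht107]; field_simp; norm_num
    _ ≤ y ^ 3 * t / 800 := by gcongr
    _ = (y / 2) ^ 3 * t / 100 := by ring
    _ ≤ (p : ℝ) ^ 3 * t / 100 := by gcongr

theorem one_le_log {t : ℕ} (ht : 3 ≤ t) : 1 ≤ Real.log t := by
  have h3 : (3 : ℝ) ≤ t := by exact_mod_cast ht
  rw [Real.le_log_iff_exp_le (by linarith)]
  linarith [Real.exp_one_lt_d9]

end Asymptotics

/-- There exists `c₁ > 0` such that for all integers `t ≥ 3`,
`r(C₅,t) ≥ c₁ · t^{10/7} / (log t)^{13/7}`. -/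
theorem ramsey_C5_lower :
    ∃ c₁ : ℝ, 0 < c₁ ∧ ∀ t : ℕ, 3 ≤ t →
      c₁ * (t : ℝ) ^ ((10 : ℝ) / 7) / (Real.log t) ^ ((13 : ℝ) / 7)
        ≤ (ramseyF (SimpleGraph.cycleGraph 5) t : ℝ) := by
  -- for `t ≤ t₀` the trivial bound `1 ≤ r(C₅, t)` suffices after shrinking the constant
  obtain ⟨t₀, ht₀⟩ := large_case
  have hc : (0 : ℝ) < 1 / ((t₀ : ℝ) + 1) ^ 2 := by positivity
  refine ⟨min (1 / 104000) (1 / ((t₀ : ℝ) + 1) ^ 2), lt_min (by norm_num) hc, fun t ht => ?_⟩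
  have hl := one_le_log ht
  have hlp : 1 ≤ Real.log t ^ ((13 : ℝ) / 7) := Real.one_le_rpow hl (by norm_num)
  have ht1 : (1 : ℝ) ≤ t := by exact_mod_cast (by omega : 1 ≤ t)
  rcases le_total t₀ t with h | h
  · refine le_trans ?_ (ht₀ t ht h hl)
    gcongr
    exact min_le_left _ _
  · have hr : (1 : ℝ) ≤ ramseyF (SimpleGraph.cycleGraph 5) t := by
      exact_mod_cast one_le_ramseyF ht
    refine le_trans ?_ hr
    rw [div_le_one (by linarith)]
    refine le_trans ?_ hlp
    have h2 : (t : ℝ) ^ ((10 : ℝ) / 7) ≤ ((t₀ : ℝ) + 1) ^ 2 := by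
      calc (t : ℝ) ^ ((10 : ℝ) / 7) ≤ (t : ℝ) ^ (2 : ℝ) :=
            Real.rpow_le_rpow_of_exponent_le ht1 (by norm_num)
        _ = (t : ℝ) ^ 2 := Real.rpow_two _
        _ ≤ _ := by
            have : (t : ℝ) ≤ t₀ := by exact_mod_cast h
            gcongr; linarith
    calc _ ≤ 1 / ((t₀ : ℝ) + 1) ^ 2 * ((t₀ : ℝ) + 1) ^ 2 := by
          gcongr
          exact min_le_right _ _
      _ = 1 := by field_simp
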